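/- Assume E[Z²] < ∞ and d > 10 (so that pivotal points exist P^{−∞,∞}-almost surely). There exists C < ∞ such that for every i ∈ ℤ and every n ≥ 2, P^{−∞,∞}[ γ_{i+1} − γ_i ≥ n ] ≤ C (log n)^{(d−6)/2} n^{−(d−8)/2}. -/

import Mathlib

/-!
Common vocabulary: subgraphs of `ℤ^d` (traces of branching random walks), graph
distance, effective resistance (unit edge resistances, via the Dirichlet variational
principle), cut-bonds and cut-points; plane trees coded by finite words, branching
random walk embeddings, and the (discrete) laws of Galton–Watson trees written by
their elementary weights.
-/

noncomputable section

open MeasureTheory Filter Topology Set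

/-- Points of the lattice `ℤ^d`. -/
abbrev Zd (d : ℕ) := Fin d → ℤ

/-- A (sub)graph of `ℤ^d`, given by its vertex set and its (oriented) edge set. -/
structure LatticeGraph (d : ℕ) where
  verts : Set (Zd d)
  edges : Set (Zd d × Zd d)

namespace LatticeGraph

variable {d : ℕ}

/-- `G.IsPath m f a b` : `f` is a path of `m` steps from `a` to `b` using edges of `G`
(in either orientation). -/
def IsPath (G : LatticeGraph d) (m : ℕ) (f : ℕ → Zd d) (a b : Zd d) : Prop :=
  f 0 = a ∧ f m = b ∧ ∀ i < m, (f i, f (i + 1)) ∈ G.edges ∨ (f (i + 1), f i) ∈ G.edges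

def Connected (G : LatticeGraph d) (a b : Zd d) : Prop :=
  ∃ m f, G.IsPath m f a b

/-- Graph distance in `G` (junk value `0` if `a` and `b` are not connected). -/
noncomputable def dist (G : LatticeGraph d) (a b : Zd d) : ℕ :=
  sInf {m : ℕ | ∃ f, G.IsPath m f a b}

/-- Dirichlet energy of `h` on `G` (unit conductances). -/
noncomputable def energy (G : LatticeGraph d) (h : Zd d → ℝ) : ℝ :=
  ∑' e : G.edges, (h (e : Zd d × Zd d).1 - h (e : Zd d × Zd d).2) ^ 2

/-- Effective resistance between `a` and `b` in `G` with unit resistances on the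
edges, defined through the Dirichlet variational principle. -/
noncomputable def effRes (G : LatticeGraph d) (a b : Zd d) : ℝ :=
  (sInf {r : ℝ | ∃ h : Zd d → ℝ, h a = 1 ∧ h b = 0 ∧ r = G.energy h})⁻¹

def deleteEdge (G : LatticeGraph d) (e : Zd d × Zd d) : LatticeGraph d :=
  ⟨G.verts, G.edges \ {e, (e.2, e.1)}⟩

/-- A cut-bond: an edge whose removal disconnects its endpoints. -/
def IsCutBond (G : LatticeGraph d) (e : Zd d × Zd d) : Prop :=
  e ∈ G.edges ∧ ¬ (G.deleteEdge e).Connected e.1 e.2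

/-- A cut-point: the endpoint of a cut-bond lying on the same side as the root `0`. -/
def IsCutPoint (G : LatticeGraph d) (x : Zd d) : Prop :=
  ∃ e, G.IsCutBond e ∧
    ((x = e.1 ∧ (G.deleteEdge e).Connected 0 e.1) ∨
      (x = e.2 ∧ (G.deleteEdge e).Connected 0 e.2))

/-- `G.Sep c a b` : every path from `a` to `b` in `G` passes through `c`. -/
def Sep (G : LatticeGraph d) (c a b : Zd d) : Prop :=
  ∀ m f, G.IsPath m f a b → ∃ i ≤ m, f i = c

/-- `y` is the first cut-point encountered on any path from `x` to the root `0`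
(with the convention that, if no cut-point separates `x` from `0`, `y` is a cut-point
at minimal graph distance from `0`). -/
def IsFirstCutPointFrom (G : LatticeGraph d) (x y : Zd d) : Prop :=
  (G.IsCutPoint y ∧ G.Sep y x 0 ∧ ∀ z, G.IsCutPoint z → G.Sep z x 0 → G.Sep z y 0) ∨
    ((¬ ∃ z, G.IsCutPoint z ∧ G.Sep z x 0) ∧ G.IsCutPoint y ∧
      ∀ z, G.IsCutPoint z → G.dist 0 y ≤ G.dist 0 z)

/-- The point `π_n(x)` of the paper. -/
noncomputable def firstCutPoint (G : LatticeGraph d) (x : Zd d) : Zd d :=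
  Classical.epsilon (G.IsFirstCutPointFrom x)

end LatticeGraph

/-! ### Plane trees and branching random walk embeddings -/

/-- A (plane) tree as a set of finite words: contains the root, is closed under
taking parents and under taking younger siblings. -/
def IsPlaneTree (t : Set (List ℕ)) : Prop :=
  [] ∈ t ∧ (∀ (w : List ℕ) (k : ℕ), w ++ [k] ∈ t → w ∈ t) ∧
    ∀ (w : List ℕ) (j k : ℕ), j ≤ k → w ++ [k] ∈ t → w ++ [j] ∈ t

/-- Number of children of the vertex `w` in the tree `t`. -/
noncomputable def childCount (t : Set (List ℕ)) (w : List ℕ) : ℕ :=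
  Set.ncard {k : ℕ | w ++ [k] ∈ t}

/-- A nearest-neighbour step of `ℤ^d`. -/
def IsUnitStep {d : ℕ} (v : Zd d) : Prop :=
  ∃ i : Fin d, (∀ j, j ≠ i → v j = 0) ∧ (v i = 1 ∨ v i = -1)

/-- `g` assigns nearest-neighbour increments along the edges of `t`. -/
def IsBRWEmbedding {d : ℕ} (t : Set (List ℕ)) (g : List ℕ → Zd d) : Prop :=
  ∀ w ∈ t, w ≠ [] → IsUnitStep (g w - g w.dropLast)

/-- The trace of the spatial tree `(t, g)`: the subgraph of `ℤ^d` whose vertices are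
the images of the vertices of `t` and whose edges are the images of the edges of `t`. -/
def traceGraph (d : ℕ) (t : Set (List ℕ)) (g : List ℕ → Zd d) : LatticeGraph d :=
  ⟨g '' t, {e | ∃ w ∈ t, w ≠ ([] : List ℕ) ∧ e = (g w.dropLast, g w)}⟩

open scoped ENNReal

/-- The Galton–Watson weight of a finite plane tree `t` for the offspring law `p`:
`∏_{v ∈ t} p(number of children of v)`. -/
noncomputable def gwWeight (p : PMF ℕ) (t : Set (List ℕ)) : ℝ≥0∞ :=
  ∏ᶠ w ∈ t, p (childCount t w)

/-- The weight of a "bush": the root has `Z̃ - 1` children (`Z̃` the size-biased law,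
`P[Z̃ = k] = k p_k`), each of which generates an independent critical Galton–Watson
tree with offspring law `p`. -/
noncomputable def bushWeight (p : PMF ℕ) (t : Set (List ℕ)) : ℝ≥0∞ :=
  ((childCount t [] + 1 : ℕ) : ℝ≥0∞) * p (childCount t [] + 1) *
    ∏ᶠ w ∈ t \ {([] : List ℕ)}, p (childCount t w)

/-! ### Moment conditions on the offspring law -/

def HasMeanOne (p : PMF ℕ) : Prop := ∑' k : ℕ, (k : ℝ) * (p k).toReal = 1

def FiniteSecondMoment (p : PMF ℕ) : Prop :=
  Summable fun k : ℕ => (k : ℝ) ^ 2 * (p k).toReal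

def PosVariance (p : PMF ℕ) : Prop :=
  0 < ∑' k : ℕ, ((k : ℝ) - 1) ^ 2 * (p k).toReal

def HasExpMoment (p : PMF ℕ) : Prop :=
  ∃ lam : ℝ, 0 < lam ∧ Summable fun k : ℕ => Real.exp (lam * k) * (p k).toReal

/-- The offspring distribution is non-lattice (aperiodic). -/
def AperiodicSupport (p : PMF ℕ) : Prop :=
  ∀ m : ℕ, 2 ≤ m → ∃ k : ℕ, p k ≠ 0 ∧ ¬ ((m : ℤ) ∣ ((k : ℤ) - 1))

/-- Standard deviation `σ_Z` of the offspring law (which has mean one). -/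
noncomputable def sigmaZ (p : PMF ℕ) : ℝ :=
  Real.sqrt (∑' k : ℕ, ((k : ℝ) - 1) ^ 2 * (p k).toReal)

/-- Euclidean distance on `ℤ^d`. -/
noncomputable def euclDist {d : ℕ} (x y : Zd d) : ℝ :=
  Real.sqrt (∑ i, ((x i : ℝ) - (y i : ℝ)) ^ 2)

/-!
### The bi-infinite incipient critical branching random walk `ω_{-∞,∞}`

The model is specified completely: a two-sided nearest-neighbour backbone walk
`walk` together with, at each backbone index `n`, an independent "bush"
(a finite plane tree `btree n` with root mapped to `walk n` and a branching random
walk embedding `bemb n`); the joint law of all cylinder events is prescribed by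
`hlaw` (uniform steps for the walk, size-biased root offspring and critical
Galton–Watson descendants for the bushes, uniform nearest-neighbour increments for
the embeddings).  `piv` enumerates the (a.s. existing) pivotal indices increasingly,
`piv 1` being the smallest positive one.
-/

structure BiInfModel (d : ℕ) (p : PMF ℕ) where
  Ω : Type
  mΩ : MeasurableSpace Ω
  P : @Measure Ω mΩ
  hP : IsProbabilityMeasure P
  walk : ℤ → Ω → Zd d
  btree : ℤ → Ω → Set (List ℕ)
  bemb : ℤ → Ω → List ℕ → Zd d
  piv : ℤ → Ω → ℤ
  hwalk0 : ∀ ω, walk 0 ω = 0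
  hstep : ∀ (n : ℤ) (ω : Ω), IsUnitStep (walk (n + 1) ω - walk n ω)
  hbtree : ∀ (n : ℤ) (ω : Ω), IsPlaneTree (btree n ω) ∧ (btree n ω).Finite
  hbroot : ∀ (n : ℤ) (ω : Ω), bemb n ω ([] : List ℕ) = walk n ω
  hbemb : ∀ (n : ℤ) (ω : Ω), IsBRWEmbedding (btree n ω) (bemb n ω)
  hlaw : ∀ (N : ℕ) (a : ℤ → Zd d), a 0 = 0 →
    (∀ k : ℤ, -(N : ℤ) ≤ k → k < (N : ℤ) → IsUnitStep (a (k + 1) - a k)) →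
    ∀ F : Finset ℤ, (∀ m ∈ F, -(N : ℤ) ≤ m ∧ m ≤ (N : ℤ)) →
    ∀ t : ℤ → Set (List ℕ), (∀ m ∈ F, IsPlaneTree (t m) ∧ (t m).Finite) →
    ∀ g : ℤ → List ℕ → Zd d,
      (∀ m ∈ F, g m ([] : List ℕ) = a m ∧ IsBRWEmbedding (t m) (g m)) →
    P {ω | (∀ k : ℤ, -(N : ℤ) ≤ k → k ≤ (N : ℤ) → walk k ω = a k) ∧
        ∀ m ∈ F, btree m ω = t m ∧ ∀ v ∈ t m, bemb m ω v = g m v}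
      = ((2 * d : ℕ) : ℝ≥0∞)⁻¹ ^ (2 * N) *
        ∏ m ∈ F, bushWeight p (t m) * ((2 * d : ℕ) : ℝ≥0∞)⁻¹ ^ ((t m).ncard - 1)
  hpiv : ∀ᵐ ω ∂P,
    (StrictMono fun i => piv i ω) ∧
    (∀ i : ℤ,
      (⋃ n ∈ Set.Iic (piv i ω), bemb n ω '' btree n ω) ∩
        (⋃ n ∈ Set.Ici (piv i ω + 1), bemb n ω '' btree n ω) = ∅) ∧
    (∀ j : ℤ,
      ((⋃ n ∈ Set.Iic j, bemb n ω '' btree n ω) ∩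
        (⋃ n ∈ Set.Ici (j + 1), bemb n ω '' btree n ω) = ∅) → (∃ i : ℤ, piv i ω = j)) ∧
    0 < piv 1 ω ∧
    ∀ j : ℤ, 0 < j →
      ((⋃ n ∈ Set.Iic j, bemb n ω '' btree n ω) ∩
        (⋃ n ∈ Set.Ici (j + 1), bemb n ω '' btree n ω) = ∅) → piv 1 ω ≤ j

namespace BiInfModel

variable {d : ℕ} {p : PMF ℕ}

/-- The vertex set `B^{(n)}(α(n))` of the bush attached at backbone index `n`. -/
def bushVerts (M : BiInfModel d p) (n : ℤ) (ω : M.Ω) : Set (Zd d) :=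
  M.bemb n ω '' M.btree n ω

/-- `α(i)` is a pivotal point: `B(α((-∞,i])) ∩ B(α([i+1,∞))) = ∅`. -/
def Pivotal (M : BiInfModel d p) (i : ℤ) (ω : M.Ω) : Prop :=
  (⋃ n ∈ Set.Iic i, M.bushVerts n ω) ∩ (⋃ n ∈ Set.Ici (i + 1), M.bushVerts n ω) = ∅

/-- The trace `ω_{-∞,∞}` as a subgraph of `ℤ^d` (bushes together with the backbone
edges). -/
noncomputable def graph (M : BiInfModel d p) (ω : M.Ω) : LatticeGraph d :=
  ⟨(⋃ n : ℤ, M.bushVerts n ω),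
    (⋃ n : ℤ, (traceGraph d (M.btree n ω) (M.bemb n ω)).edges) ∪
      ⋃ n : ℤ, {(M.walk n ω, M.walk (n + 1) ω)}⟩

/-- Conditional expectation given that `0` is a pivotal point. -/
noncomputable def condPiv (M : BiInfModel d p) (X : M.Ω → ℝ) : ℝ :=
  (∫ ω in {ω | M.Pivotal 0 ω}, X ω ∂M.P) / (M.P {ω | M.Pivotal 0 ω}).toReal

/-- `ρ₁ = E[R_eff(0, α(γ₁)) | 0 pivotal] / E[γ₁ | 0 pivotal]`. -/
noncomputable def rho1 (M : BiInfModel d p) : ℝ :=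
  M.condPiv (fun ω => (M.graph ω).effRes 0 (M.walk (M.piv 1 ω) ω)) /
    M.condPiv fun ω => (M.piv 1 ω : ℝ)

/-- `ρ₂ = E[d_{ω_{-∞,∞}}(0, α(γ₁)) | 0 pivotal] / E[γ₁ | 0 pivotal]`
(this is also the constant `σ_G`). -/
noncomputable def rho2 (M : BiInfModel d p) : ℝ :=
  M.condPiv (fun ω => ((M.graph ω).dist 0 (M.walk (M.piv 1 ω) ω) : ℝ)) /
    M.condPiv fun ω => (M.piv 1 ω : ℝ)

/-- `ρ = E[R_eff(0, α(γ₁)) | 0 pivotal] / E[d_{ω_{-∞,∞}}(0, α(γ₁)) | 0 pivotal]`. -/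
noncomputable def rhoR (M : BiInfModel d p) : ℝ :=
  M.condPiv (fun ω => (M.graph ω).effRes 0 (M.walk (M.piv 1 ω) ω)) /
    M.condPiv fun ω => ((M.graph ω).dist 0 (M.walk (M.piv 1 ω) ω) : ℝ)

end BiInfModel

/-!
Record the model through its cells: the `n`-th cell consists of the step of the backbone at `n` and
the `n`-th bush in coordinates relative to the backbone. The cells are i.i.d., so the set of pivotal
indices is a stationary random subset of `ℤ`.

Two bushes at distance `l` along the backbone meet with probability at most a constant (finite as
`E[Z²] < ∞`) times `∑_{a, b} p_{a + l + b}(0)`, where `p_n` is the `n`-step transition probability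
of simple random walk and `a`, `b` are the generations of the common vertex. Since `p_n(0)` is of
order `n^{-d/2}`, and both this double sum and the union bound over pairs of bushes at distance at
least `n` cost two summations each, the probability that some bush at an index `≤ m` meets some bush
at an index `≥ m + n` is `O(n^{-(d-8)/2})`.

If an index is not pivotal, then either two bushes meet inside the window of radius `L` around it,
or bushes at distance more than `L` meet. The windows of `K` well-separated indices are independent
and each contains a meeting with probability at most `1 - P[0 is pivotal] < 1`. With `K` of order
`log n` and `L` of order `n / log n`, the interval `(0, n / 2]` hence contains no pivotal index with
probability `O((log n)^{(d-6)/2} n^{-(d-8)/2})`.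

Finally, let `q` be this probability and call a pivotal index followed by a gap of length at least
`n` special. The events that `0, -1, …, -(n / 2 - 1)` are special are disjoint and equally likely,
so each has probability at most `2 q / n`. Unless an event of probability `O(q)` occurs,
`γ₀ = -k` with `k < n`, and for each such `k` mass transport along the bijection `γ₀ ↦ γᵢ` bounds
the probability that `γ₀ = -k` and `γᵢ` is special by the probability that `0` is special.
-/

/-! ### Simple random walk on `ℤ^d` and its return probabilities -/

section SimpleRandomWalk

variable {d : ℕ}

/-- The `2d` nearest-neighbour steps, indexed by an axis and a sign (`true` for `+`). -/
def stepVec (s : Fin d × Bool) : Zd d := if s.2 then Pi.single s.1 1 else -Pi.single s.1 1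

/-- The uniform law on nearest-neighbour steps (a probability measure as soon as `d ≠ 0`). -/
def stepLaw (d : ℕ) : Measure (Zd d) :=
  ∑ s : Fin d × Bool, ((2 * d : ℕ) : ℝ≥0∞)⁻¹ • Measure.dirac (stepVec s)

lemma stepVec_not (j : Fin d) (b : Bool) : stepVec (j, !b) = -stepVec (j, b) := by
  cases b <;> simp [stepVec]

lemma stepVec_injective : Function.Injective (stepVec (d := d)) := by
  rintro ⟨i, b⟩ ⟨j, c⟩ h
  have hi := congrFun h i
  by_cases hij : i = j
  · subst hij
    clear h
    revert hi
    cases b <;> cases c <;> simp [stepVec]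
  · cases b <;> cases c <;> simp [stepVec, hij] at hi

lemma exists_stepVec_eq {v : Zd d} (hv : IsUnitStep v) : ∃ s, stepVec s = v := by
  obtain ⟨i, hzero, hone | hone⟩ := hv
  · refine ⟨(i, true), funext fun j => ?_⟩
    by_cases hj : j = i
    · subst hj; simp [stepVec, hone]
    · simp [stepVec, hj, hzero j hj]
  · refine ⟨(i, false), funext fun j => ?_⟩
    by_cases hj : j = i
    · subst hj; simp [stepVec, hone]
    · simp [stepVec, hj, hzero j hj]

lemma lintegral_stepLaw (f : Zd d → ℝ≥0∞) :
    ∫⁻ v, f v ∂stepLaw d = ∑ s, ((2 * d : ℕ) : ℝ≥0∞)⁻¹ * f (stepVec s) := by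
  simp [stepLaw, lintegral_finsetSum_measure]

lemma stepLaw_singleton {v : Zd d} (hv : IsUnitStep v) :
    stepLaw d {v} = ((2 * d : ℕ) : ℝ≥0∞)⁻¹ := by
  obtain ⟨s, rfl⟩ := exists_stepVec_eq hv
  have hmass (t : Fin d × Bool) :
      Measure.dirac (stepVec t) {stepVec s} = if t = s then (1 : ℝ≥0∞) else 0 := by
    simp [Measure.dirac_apply' _ (measurableSet_singleton _), indicator_apply,
      stepVec_injective.eq_iff]
  simp [stepLaw, hmass]

variable [NeZero d]

instance isProbabilityMeasure_stepLaw : IsProbabilityMeasure (stepLaw d) := by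
  have hd : ((2 * d : ℕ) : ℝ≥0∞) ≠ 0 := by simp [NeZero.ne d]
  refine ⟨?_⟩
  rw [← lintegral_one, lintegral_stepLaw]
  simpa [mul_comm] using ENNReal.mul_inv_cancel hd (ENNReal.natCast_ne_top _)

/-- `srwKernel d n z` is the `n`-step transition probability from `0` to `z` of simple random walk
on `ℤ^d`. -/
def srwKernel (d n : ℕ) (z : Zd d) : ℝ≥0∞ :=
  Measure.pi (fun _ : Fin n => stepLaw d) {x | ∑ k, x k = z}

lemma srwKernel_zero (z : Zd d) : srwKernel d 0 z = if z = 0 then 1 else 0 := by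
  by_cases hz : z = 0 <;> simp [srwKernel, hz, eq_comm]

lemma srwKernel_succ (n : ℕ) (z : Zd d) :
    srwKernel d (n + 1) z =
      ∑ s : Fin d × Bool, ((2 * d : ℕ) : ℝ≥0∞)⁻¹ * srwKernel d n (z - stepVec s) := by
  have hmp := measurePreserving_piFinSuccAbove (fun _ : Fin (n + 1) => stepLaw d) 0
  have hmeas : MeasurableSet {q : Zd d × (Fin n → Zd d) | q.1 + ∑ k, q.2 k = z} := by measurability
  have hsplit : {x : Fin (n + 1) → Zd d | ∑ k, x k = z} =
      MeasurableEquiv.piFinSuccAbove (fun _ : Fin (n + 1) => Zd d) 0 ⁻¹'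
        {q | q.1 + ∑ k, q.2 k = z} := by
    ext x
    simp [Fin.sum_univ_succ, MeasurableEquiv.piFinSuccAbove, Fin.insertNthEquiv,
      Fin.tail]
  rw [srwKernel, hsplit, hmp.measure_preimage hmeas.nullMeasurableSet, Measure.prod_apply hmeas,
    lintegral_stepLaw]
  simp [srwKernel, eq_sub_iff_add_eq']

lemma infinitePi_stepLaw_sum_eq {ι : Type*} {n : ℕ} {f : Fin n → ι} (hf : Function.Injective f)
    (z : Zd d) :
    Measure.infinitePi (fun _ : ι => stepLaw d) {x | ∑ k, x (f k) = z} = srwKernel d n z := by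
  have hmap := Measure.map_infinitePi_infinitePi_of_inj (P := fun _ : ι => stepLaw d) hf
  rw [Measure.infinitePi_eq_pi (ι := Fin n)] at hmap
  rw [srwKernel, ← hmap, Measure.map_apply (by fun_prop) (by measurability)]
  rfl

lemma srwKernel_neg (n : ℕ) (z : Zd d) : srwKernel d n (-z) = srwKernel d n z := by
  induction n generalizing z with
  | zero => simp [srwKernel_zero]
  | succ n ih =>
    simp only [srwKernel_succ]
    refine Fintype.sum_equiv ((Equiv.refl _).prodCongr Equiv.boolNot) _ _ fun ⟨j, b⟩ => ?_
    rw [← ih]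
    simp [stepVec_not, add_comm]

lemma srwKernel_add (m n : ℕ) (z : Zd d) :
    srwKernel d (m + n) z = ∑' x, srwKernel d m x * srwKernel d n (z - x) := by
  induction m generalizing z with
  | zero =>
    rw [tsum_eq_single 0 fun x hx => by simp [srwKernel_zero, hx]]
    simp [srwKernel_zero]
  | succ m ih =>
    simp only [add_right_comm m 1 n, srwKernel_succ, ih, Finset.sum_mul]
    rw [Summable.tsum_finsetSum fun _ _ => ENNReal.summable]
    refine Finset.sum_congr rfl fun s _ => ?_
    rw [← ENNReal.tsum_mul_left, ← (Equiv.subRight (stepVec s)).tsum_eq]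
    simp [mul_assoc]

lemma tsum_srwKernel_mul_mul_sub (a l b : ℕ) :
    ∑' (x : Zd d) (z : Zd d), srwKernel d a x * srwKernel d l z * srwKernel d b (x - z) =
      srwKernel d (a + l + b) 0 := by
  simp_rw [mul_assoc, ENNReal.tsum_mul_left, ← srwKernel_add]
  rw [add_assoc, srwKernel_add]
  simp [srwKernel_neg]

lemma srwKernel_ne_top (n : ℕ) (z : Zd d) : srwKernel d n z ≠ ⊤ := measure_ne_top _ _

end SimpleRandomWalk

section LocalLimitBound

open UnitAddTorus

variable {d : ℕ}

/-- The characteristic function `d⁻¹ ∑ⱼ cos (2π xⱼ)` of a nearest-neighbour step, as a function on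
the torus `(ℝ/ℤ)^d`. -/
def stepChar (x : UnitAddTorus (Fin d)) : ℝ := (d : ℝ)⁻¹ * ∑ j, (fourier 1 (x j)).re

lemma sum_mFourier_sub_stepVec (z : Zd d) (x : UnitAddTorus (Fin d)) :
    ∑ s : Fin d × Bool, (2 * d : ℂ)⁻¹ * mFourier (z - stepVec s) x = stepChar x * mFourier z x := by
  have hpair (j : Fin d) : ∑ b : Bool, mFourier (z - stepVec (j, b)) x =
      2 * (fourier 1 (x j)).re * mFourier z x := by
    have hre := Complex.add_conj (fourier 1 (x j))
    simp only [sub_eq_add_neg, mFourier_add, Fintype.sum_bool, stepVec, if_true, Bool.false_eq_true,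
      if_false, Complex.conj_conj, mFourier_neg, mFourier_single]
    push_cast at hre
    linear_combination mFourier z x * hre
  simp_rw [← Finset.mul_sum, Fintype.sum_prod_type, hpair, ← Finset.sum_mul, ← Finset.mul_sum,
    stepChar]
  push_cast
  ring

lemma continuous_stepChar : Continuous (stepChar (d := d)) := by
  unfold stepChar
  fun_prop

lemma integral_fourier_unitAddCircle (k : ℤ) :
    ∫ x : UnitAddCircle, fourier k x = if k = 0 then 1 else 0 := by
  split_ifs with hk
  · simp [hk, measureReal_def]
  · exact integral_eq_zero_of_add_right_eq_neg (fourier_add_half_inv_index hk one_pos)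

lemma integral_mFourier (z : Zd d) : ∫ x, mFourier z x = if z = 0 then 1 else 0 := by
  simp only [mFourier, ContinuousMap.coe_mk]
  rw [integral_fintype_prod_volume_eq_prod fun j x => fourier (z j) x]
  simp only [integral_fourier_unitAddCircle]
  split_ifs with hz
  · simp [hz]
  · obtain ⟨j, hj⟩ := Function.ne_iff.1 hz
    exact Finset.prod_eq_zero (Finset.mem_univ j) (if_neg hj)

lemma integrable_stepChar_pow_mul_mFourier (n : ℕ) (z : Zd d) :
    Integrable fun x => (stepChar x : ℂ) ^ n * mFourier z x := by
  have hcont := continuous_stepChar (d := d)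
  exact Continuous.integrable_of_hasCompactSupport (by fun_prop) (.of_compactSpace _)

lemma integral_stepChar_pow_mul_mFourier [NeZero d] (n : ℕ) (z : Zd d) :
    ∫ x, (stepChar x : ℂ) ^ n * mFourier z x = (srwKernel d n z).toReal := by
  induction n generalizing z with
  | zero =>
    simp only [pow_zero, one_mul, integral_mFourier, srwKernel_zero]
    split_ifs <;> simp
  | succ n ih =>
    have hexpand (x : UnitAddTorus (Fin d)) : (stepChar x : ℂ) ^ (n + 1) * mFourier z x =
        ∑ s : Fin d × Bool,
          (2 * d : ℂ)⁻¹ * ((stepChar x : ℂ) ^ n * mFourier (z - stepVec s) x) := by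
      rw [pow_succ, mul_assoc, ← sum_mFourier_sub_stepVec, Finset.mul_sum]
      exact Finset.sum_congr rfl fun s _ => by ring
    simp_rw [hexpand]
    rw [integral_finsetSum _ fun s _ => (integrable_stepChar_pow_mul_mFourier n _).const_mul _]
    simp_rw [integral_const_mul, ih, srwKernel_succ]
    rw [ENNReal.toReal_sum fun s _ => by
      finiteness [srwKernel_ne_top n (z - stepVec s), NeZero.ne d]]
    simp

lemma fourier_one_coe_re (y : ℝ) :
    (fourier 1 (y : UnitAddCircle)).re = Real.cos (2 * Real.pi * y) := by
  rw [fourier_coe_apply]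
  simp only [Int.cast_one, mul_one, Complex.ofReal_one, div_one]
  rw [← Complex.exp_ofReal_mul_I_re]
  push_cast
  ring_nf

lemma abs_stepChar_pow_le [NeZero d] (n : ℕ) (x : UnitAddTorus (Fin d)) :
    |stepChar x| ^ n ≤ ∏ j, Real.exp (-(n / d * (1 - |(fourier 1 (x j)).re|))) := by
  have hd : (d : ℝ) ≠ 0 := by exact_mod_cast NeZero.ne d
  have habs : |stepChar x| ≤ (d : ℝ)⁻¹ * ∑ j, |(fourier 1 (x j)).re| := by
    rw [stepChar, abs_mul, abs_of_nonneg (by positivity : (0 : ℝ) ≤ (d : ℝ)⁻¹)]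
    gcongr
    exact Finset.abs_sum_le_sum_abs _ _
  calc |stepChar x| ^ n
      ≤ Real.exp (|stepChar x| - 1) ^ n := by
        gcongr
        linarith [Real.add_one_le_exp (|stepChar x| - 1)]
    _ = Real.exp (n * (|stepChar x| - 1)) := by rw [← Real.exp_nat_mul]
    _ ≤ Real.exp (n * ((d : ℝ)⁻¹ * ∑ j, |(fourier 1 (x j)).re| - 1)) := by gcongr
    _ = _ := by
        rw [← Real.exp_sum, Finset.sum_neg_distrib, ← Finset.mul_sum, Finset.sum_sub_distrib]
        simp only [Finset.sum_const, Finset.card_univ, Fintype.card_fin, nsmul_eq_mul]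
        congr 1
        field_simp
        ring

lemma one_sub_abs_cos_two_pi_mul_ge {y : ℝ} (hy : |y| ≤ 1 / 4) :
    8 * y ^ 2 ≤ 1 - |Real.cos (2 * Real.pi * y)| := by
  have hpi := Real.pi_pos
  have harg : |2 * Real.pi * y| ≤ Real.pi / 2 := by
    rw [abs_mul, abs_of_pos (by positivity)]
    nlinarith
  have hcos := Real.cos_le_one_sub_mul_cos_sq (harg.trans (by linarith))
  have hsq : 2 / Real.pi ^ 2 * (2 * Real.pi * y) ^ 2 = 8 * y ^ 2 := by field_simp; ring
  rw [abs_of_nonneg (Real.cos_nonneg_of_mem_Icc (abs_le.1 harg))]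
  linarith

lemma intervalIntegral_exp_abs_cos_le {c : ℝ} (hc : 0 < c) :
    ∫ y in (-(1 / 4))..(1 / 4), Real.exp (-(c * (1 - |Real.cos (2 * Real.pi * y)|))) ≤
      √(Real.pi / (8 * c)) := by
  have hint : Integrable fun y : ℝ => Real.exp (-(8 * c) * y ^ 2) :=
    integrable_exp_neg_mul_sq (by positivity)
  calc ∫ y in (-(1 / 4))..(1 / 4), Real.exp (-(c * (1 - |Real.cos (2 * Real.pi * y)|)))
      ≤ ∫ y in (-(1 / 4))..(1 / 4), Real.exp (-(8 * c) * y ^ 2) := by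
        refine intervalIntegral.integral_mono_on (by norm_num)
          (Continuous.intervalIntegrable (by fun_prop) _ _) hint.intervalIntegrable fun y hy => ?_
        have := mul_le_mul_of_nonneg_left (one_sub_abs_cos_two_pi_mul_ge (abs_le.2 hy)) hc.le
        gcongr
        linarith
    _ ≤ ∫ y, Real.exp (-(8 * c) * y ^ 2) := by
        rw [intervalIntegral.integral_of_le (by norm_num)]
        exact setIntegral_le_integral hint (.of_forall fun y => (Real.exp_pos _).le)
    _ = √(Real.pi / (8 * c)) := integral_gaussian _

lemma integral_exp_abs_fourier_one_re_le {c : ℝ} (hc : 0 < c) :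
    ∫ x : UnitAddCircle, Real.exp (-(c * (1 - |(fourier 1 x).re|))) ≤ √(Real.pi / (2 * c)) := by
  set f : ℝ → ℝ := fun y => Real.exp (-(c * (1 - |Real.cos (2 * Real.pi * y)|))) with hf
  -- `|cos|` has half the period of `cos`, so the circle covers the bump around `0` twice.
  have hper : Function.Periodic f (1 / 2) := fun y => by
    simp only [hf, show 2 * Real.pi * (y + 1 / 2) = 2 * Real.pi * y + Real.pi by ring,
      Real.cos_add_pi, abs_neg]
  have hint (a b : ℝ) : IntervalIntegrable f volume a b :=
    Continuous.intervalIntegrable (by fun_prop) _ _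
  have hhalf : ∫ y in (1 / 4)..(3 / 4), f y = ∫ y in (-(1 / 4))..(1 / 4), f y := by
    convert hper.intervalIntegral_add_eq (1 / 4) (-(1 / 4)) using 2 <;> norm_num
  calc ∫ x : UnitAddCircle, Real.exp (-(c * (1 - |(fourier 1 x).re|)))
      = ∫ y in (-(1 / 4))..(3 / 4), f y := by
        rw [← UnitAddCircle.intervalIntegral_preimage (-(1 / 4))]
        norm_num [fourier_one_coe_re, hf, -fourier_apply]
    _ = 2 * ∫ y in (-(1 / 4))..(1 / 4), f y := by
        rw [← intervalIntegral.integral_add_adjacent_intervals (hint _ (1 / 4)) (hint _ _), hhalf,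
          two_mul]
    _ ≤ 2 * √(Real.pi / (8 * c)) := by gcongr; exact intervalIntegral_exp_abs_cos_le hc
    _ = √(Real.pi / (2 * c)) := by
        rw [← Real.sqrt_sq two_pos.le, ← Real.sqrt_mul (by norm_num)]
        congr 1
        field_simp
        norm_num

lemma toReal_srwKernel_le [NeZero d] {n : ℕ} (hn : n ≠ 0) (z : Zd d) :
    (srwKernel d n z).toReal ≤ √(Real.pi * d / (2 * n)) ^ d := by
  have hd : (0 : ℝ) < d := by exact_mod_cast NeZero.pos d
  have hn' : (0 : ℝ) < n := by exact_mod_cast Nat.pos_of_ne_zero hn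
  calc (srwKernel d n z).toReal
      = ‖∫ x, (stepChar x : ℂ) ^ n * mFourier z x‖ := by
        simp [integral_stepChar_pow_mul_mFourier]
    _ ≤ ∫ x : UnitAddTorus (Fin d), ∏ j, Real.exp (-(n / d * (1 - |(fourier 1 (x j)).re|))) := by
        refine norm_integral_le_of_norm_le ?_ (.of_forall fun x => ?_)
        · exact Continuous.integrable_of_hasCompactSupport (by fun_prop)
            (HasCompactSupport.of_compactSpace _)
        · have hchar : ‖mFourier z x‖ = 1 := by
            simp only [mFourier, ContinuousMap.coe_mk, norm_prod]
            exact Finset.prod_eq_one fun j _ => Circle.norm_coe _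
          rw [norm_mul, hchar, mul_one, norm_pow, Complex.norm_real, Real.norm_eq_abs]
          exact abs_stepChar_pow_le n x
    _ = (∫ x : UnitAddCircle, Real.exp (-(n / d * (1 - |(fourier 1 x).re|)))) ^ d := by
        rw [integral_fintype_prod_volume_eq_prod
          fun _ x => Real.exp (-(n / d * (1 - |(fourier 1 x).re|)))]
        simp
    _ ≤ √(Real.pi / (2 * (n / d))) ^ d := by
        gcongr
        exact integral_exp_abs_fourier_one_re_le (by positivity)
    _ = √(Real.pi * d / (2 * n)) ^ d := by
        congr 2
        field_simp

end LocalLimitBound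

/-! ### Polynomial decay -/

section PolynomialDecay

open scoped NNReal

/-- `f r = O(r^(-s))` as `r → ∞`, uniformly in `r ≥ 1`. -/
def HasPolyDecay (s : ℝ) (f : ℕ → ℝ≥0∞) : Prop :=
  ∃ C : ℝ≥0, ∀ r : ℕ, 1 ≤ r → f r ≤ C * ENNReal.ofReal ((r : ℝ) ^ (-s))

lemma HasPolyDecay.const_mul {s : ℝ} {f : ℕ → ℝ≥0∞} (hf : HasPolyDecay s f) {K : ℝ≥0∞}
    (hK : K ≠ ⊤) : HasPolyDecay s fun r => K * f r := by
  obtain ⟨C, hC⟩ := hf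
  lift K to ℝ≥0 using hK
  refine ⟨K * C, fun r hr => ?_⟩
  rw [ENNReal.coe_mul, mul_assoc]
  exact mul_le_mul_right (hC r hr) _

lemma integral_rpow_neg_le {s r t : ℝ} (hs : 1 < s) (hr : 0 < r) (hrt : r ≤ t) :
    ∫ x in r..t, x ^ (-s) ≤ r ^ (1 - s) / (s - 1) := by
  have hzero : (0 : ℝ) ∉ uIcc r t := by
    rw [uIcc_of_le hrt]
    exact fun h => hr.not_ge h.1
  have hpos : 0 ≤ t ^ (1 - s) := Real.rpow_nonneg (hr.le.trans hrt) _
  rw [integral_rpow (Or.inr ⟨by linarith, hzero⟩), show -s + 1 = 1 - s by ring,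
    ← neg_div_neg_eq, neg_sub, neg_sub]
  gcongr
  linarith

lemma sum_range_add_rpow_neg_le {s : ℝ} (hs : 1 < s) {r : ℕ} (hr : 1 ≤ r) (n : ℕ) :
    ∑ a ∈ Finset.range n, ((r + a : ℕ) : ℝ) ^ (-s) ≤ s / (s - 1) * (r : ℝ) ^ (1 - s) := by
  have hr1 : (1 : ℝ) ≤ r := by exact_mod_cast hr
  have hanti : AntitoneOn (fun x : ℝ => x ^ (-s)) (Icc r (r + n)) := fun x hx y _ hxy =>
    Real.rpow_le_rpow_of_nonpos (by linarith [hx.1]) hxy (by linarith)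
  calc ∑ a ∈ Finset.range n, ((r + a : ℕ) : ℝ) ^ (-s)
      ≤ ∑ a ∈ Finset.range (n + 1), ((r + a : ℕ) : ℝ) ^ (-s) :=
        Finset.sum_le_sum_of_subset_of_nonneg (Finset.range_subset_range.2 n.le_succ)
          fun _ _ _ => by positivity
    _ = ∑ a ∈ Finset.range n, ((r : ℝ) + (a + 1 : ℕ)) ^ (-s) + (r : ℝ) ^ (-s) := by
        rw [Finset.sum_range_succ']
        push_cast
        simp
    _ ≤ (r : ℝ) ^ (1 - s) / (s - 1) + (r : ℝ) ^ (1 - s) := by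
        gcongr
        · exact hanti.sum_le_integral.trans (integral_rpow_neg_le hs (by linarith) (by simp))
        · linarith
    _ = s / (s - 1) * (r : ℝ) ^ (1 - s) := by
        have : s - 1 ≠ 0 := by linarith
        field_simp
        ring

lemma HasPolyDecay.tsum_tail {s t : ℝ} {f : ℕ → ℝ≥0∞} (hf : HasPolyDecay s f) (ht : 0 < t)
    (hst : s = t + 1) : HasPolyDecay t fun r => ∑' a, f (r + a) := by
  obtain ⟨C, hC⟩ := hf
  have hs : 1 < s := by linarith
  refine ⟨C * (s / (s - 1)).toNNReal, fun r hr => ?_⟩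
  calc ∑' a, f (r + a)
      ≤ ∑' a, C * ENNReal.ofReal (((r + a : ℕ) : ℝ) ^ (-s)) :=
        ENNReal.tsum_le_tsum fun a => hC _ (by omega)
    _ ≤ C * ENNReal.ofReal (s / (s - 1) * (r : ℝ) ^ (1 - s)) := by
        rw [ENNReal.tsum_mul_left]
        gcongr
        refine ENNReal.tsum_le_of_sum_range_le fun n => ?_
        rw [← ENNReal.ofReal_sum_of_nonneg fun _ _ => by positivity]
        exact ENNReal.ofReal_le_ofReal (sum_range_add_rpow_neg_le hs hr n)
    _ = _ := by
        rw [ENNReal.ofReal_mul (div_nonneg (by linarith) (by linarith)), ENNReal.coe_mul,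
          ← mul_assoc, show 1 - s = -t by linarith]
        rfl

lemma hasPolyDecay_srwKernel (d : ℕ) [NeZero d] (z : Zd d) :
    HasPolyDecay (d / 2) fun n => srwKernel d n z := by
  refine ⟨(√(Real.pi * d / 2) ^ d).toNNReal, fun n hn => ?_⟩
  have hn' : (0 : ℝ) < n := by exact_mod_cast hn
  change srwKernel d n z ≤ ENNReal.ofReal _ * _
  rw [← ENNReal.ofReal_mul (by positivity),
    ← ENNReal.ofReal_toReal (srwKernel_ne_top n z)]
  refine ENNReal.ofReal_le_ofReal ((toReal_srwKernel_le (by omega) z).trans_eq ?_)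
  rw [show Real.pi * d / (2 * n) = Real.pi * d / 2 / n by field_simp, Real.sqrt_div (by positivity),
    div_pow, div_eq_mul_inv, Real.rpow_neg hn'.le, Real.sqrt_eq_rpow (n : ℝ),
    ← Real.rpow_mul_natCast hn'.le]
  ring_nf

end PolynomialDecay

/-! ### Offspring laws and word probabilities -/

section Offspring

variable {p : PMF ℕ}

lemma tsum_natCast_mul_eq_one (hp : HasMeanOne p) : ∑' k : ℕ, (k : ℝ≥0∞) * p k = 1 := by
  have hsum : Summable fun k : ℕ => (k : ℝ) * (p k).toReal := by
    by_contra hdiv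
    exact zero_ne_one ((tsum_eq_zero_of_not_summable hdiv).symm.trans hp)
  have h := ENNReal.ofReal_tsum_of_nonneg (fun k => by positivity) hsum
  rw [HasMeanOne] at hp
  simpa [hp, ENNReal.ofReal_mul, ENNReal.ofReal_toReal (p.apply_ne_top _)] using h.symm

lemma tsum_natCast_sq_mul_ne_top (hp : FiniteSecondMoment p) :
    ∑' k : ℕ, (k : ℝ≥0∞) ^ 2 * p k ≠ ⊤ := by
  have h := ENNReal.ofReal_tsum_of_nonneg (fun k => by positivity) hp
  simp only [Nat.cast_nonneg, ENNReal.ofReal_mul, pow_nonneg, ENNReal.ofReal_pow,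
    ENNReal.ofReal_natCast, ENNReal.ofReal_toReal (p.apply_ne_top _)] at h
  exact h ▸ ENNReal.ofReal_ne_top

/-- The law of `Z̃ - 1`, where `Z̃` is the size-biased version of a variable with law `p`. -/
def sizeBiasedPredPMF (hp : HasMeanOne p) : PMF ℕ :=
  ⟨fun k => ((k + 1 : ℕ) : ℝ≥0∞) * p (k + 1), by
    have h := tsum_natCast_mul_eq_one hp
    rw [tsum_eq_zero_add' ENNReal.summable, Nat.cast_zero, zero_mul, zero_add] at h
    exact h ▸ ENNReal.summable.hasSum⟩

/-- The law of the number of children of the vertex `w` of a bush. -/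
def offspringPMF (hp : HasMeanOne p) (w : List ℕ) : PMF ℕ :=
  if w = [] then sizeBiasedPredPMF hp else p

lemma tsum_toMeasure_Ioi (q : PMF ℕ) :
    ∑' j : ℕ, q.toMeasure (Ioi j) = ∑' k : ℕ, (k : ℝ≥0∞) * q k := by
  have htail (j : ℕ) : q.toMeasure (Ioi j) = ∑' k, if j < k then q k else 0 := by
    simp [PMF.toMeasure_apply q measurableSet_Ioi, indicator_apply]
  simp_rw [htail]
  rw [ENNReal.tsum_comm]
  refine tsum_congr fun k => ?_
  rw [tsum_eq_sum (s := Finset.range k) fun j hj => if_neg (by simpa using hj),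
    Finset.sum_congr rfl fun j hj => if_pos (Finset.mem_range.1 hj)]
  simp

lemma tsum_toMeasure_Ioi_sizeBiasedPredPMF_ne_top (hp : HasMeanOne p) (hsq : FiniteSecondMoment p) :
    ∑' j : ℕ, (sizeBiasedPredPMF hp).toMeasure (Ioi j) ≠ ⊤ := by
  rw [tsum_toMeasure_Ioi]
  refine ne_top_of_le_ne_top (tsum_natCast_sq_mul_ne_top hsq) ?_
  rw [tsum_eq_zero_add' (f := fun k : ℕ => (k : ℝ≥0∞) ^ 2 * p k) ENNReal.summable]
  refine le_add_of_nonneg_of_le zero_le (ENNReal.tsum_le_tsum fun k => ?_)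
  rw [sq, mul_assoc]
  gcongr
  · simp
  · rfl

/-- The probability that the word `v` is a vertex of a bush. -/
def wordProb (hp : HasMeanOne p) (v : List ℕ) : ℝ≥0∞ :=
  ∏ i : Fin v.length, (offspringPMF hp (v.take i)).toMeasure (Ioi v[i])

lemma tsum_pi_prod (f : ℕ → ℝ≥0∞) (n : ℕ) :
    ∑' w : Fin n → ℕ, ∏ i, f (w i) = (∑' j, f j) ^ n := by
  induction n with
  | zero => simp
  | succ n ih =>
    rw [← (Fin.consEquiv fun _ : Fin (n + 1) => ℕ).tsum_eq, ENNReal.tsum_prod']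
    simp only [Fin.consEquiv, Equiv.coe_fn_mk, Fin.prod_univ_succ, Fin.cons_zero, Fin.cons_succ,
      ENNReal.tsum_mul_left, ih, ENNReal.tsum_mul_right]
    rw [pow_succ']

lemma wordProb_ofFn_succ (hp : HasMeanOne p) {n : ℕ} (w : Fin (n + 1) → ℕ) :
    wordProb hp (List.ofFn w) = (sizeBiasedPredPMF hp).toMeasure (Ioi (w 0)) *
      ∏ i : Fin n, p.toMeasure (Ioi (w i.succ)) := by
  rw [wordProb, ← Fin.prod_congr' _ (show n + 1 = (List.ofFn w).length by simp),
    Fin.prod_univ_succ]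
  simp [offspringPMF]

/-- The expected number of vertices of a bush in each generation is at most this constant: it is
`1` in generation `0` and `E[Z̃ - 1]` afterwards. -/
def bushConst (hp : HasMeanOne p) : ℝ≥0∞ :=
  1 + ∑' j : ℕ, (sizeBiasedPredPMF hp).toMeasure (Ioi j)

lemma bushConst_ne_top (hp : HasMeanOne p) (hsq : FiniteSecondMoment p) : bushConst hp ≠ ⊤ :=
  ENNReal.add_ne_top.2 ⟨ENNReal.one_ne_top, tsum_toMeasure_Ioi_sizeBiasedPredPMF_ne_top hp hsq⟩

lemma tsum_wordProb_ofFn_le (hp : HasMeanOne p) (n : ℕ) :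
    ∑' w : Fin n → ℕ, wordProb hp (List.ofFn w) ≤ bushConst hp := by
  cases n with
  | zero =>
    have hnil : wordProb hp [] = 1 := Finset.prod_of_isEmpty (ι := Fin 0) _
    simp [hnil, bushConst]
  | succ n =>
    have hmean : ∑' j : ℕ, p.toMeasure (Ioi j) = 1 := by
      rw [tsum_toMeasure_Ioi, tsum_natCast_mul_eq_one hp]
    simp_rw [wordProb_ofFn_succ]
    rw [← (Fin.consEquiv fun _ : Fin (n + 1) => ℕ).tsum_eq, ENNReal.tsum_prod']
    simp only [Fin.consEquiv, Equiv.coe_fn_mk, Fin.cons_zero, Fin.cons_succ,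
      ENNReal.tsum_mul_left, tsum_pi_prod fun j => p.toMeasure (Ioi j), hmean, one_pow, mul_one]
    exact le_add_self

lemma tsum_wordProb_mul_le (hp : HasMeanOne p) (F : ℕ → ℝ≥0∞) :
    ∑' v, wordProb hp v * F v.length ≤ bushConst hp * ∑' n, F n := by
  rw [← (List.equivSigmaTuple (α := ℕ)).symm.tsum_eq, ENNReal.tsum_sigma', ← ENNReal.tsum_mul_left]
  refine ENNReal.tsum_le_tsum fun n => ?_
  simp only [List.equivSigmaTuple, Equiv.coe_fn_symm_mk, List.length_ofFn, ENNReal.tsum_mul_right]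
  gcongr
  exact tsum_wordProb_ofFn_le hp n

end Offspring

/-! ### Bushes -/

section Bush

variable {d : ℕ} {p : PMF ℕ}

/-- A finite set of labelled words: a finite plane tree together with the positions of its vertices,
the root being placed at the origin. -/
abbrev Bush (d : ℕ) : Type := Finset (List ℕ × Zd d)

instance measurableSpaceBush : MeasurableSpace (Bush d) := ⊤

instance discreteMeasurableSpaceBush : DiscreteMeasurableSpace (Bush d) := ⟨fun _ => trivial⟩

open scoped Classical in
/-- The bush with vertex set `t` and positions `g`; it is the junk value `∅` if `t` is infinite. -/
def toBush (t : Set (List ℕ)) (g : List ℕ → Zd d) : Bush d :=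
  if h : (t.graphOn g).Finite then h.toFinset else ∅

lemma coe_toBush {t : Set (List ℕ)} (ht : t.Finite) (g : List ℕ → Zd d) :
    (toBush t g : Set (List ℕ × Zd d)) = t.graphOn g := by
  simp [toBush, show (t.graphOn g).Finite from ht.image _]

lemma mem_toBush {t : Set (List ℕ)} (ht : t.Finite) {g : List ℕ → Zd d} {e : List ℕ × Zd d} :
    e ∈ toBush t g ↔ e.1 ∈ t ∧ g e.1 = e.2 := by
  rw [← Finset.mem_coe, coe_toBush ht, mem_graphOn]

lemma toBush_eq_iff {t : Set (List ℕ)} {g : List ℕ → Zd d} {b : Bush d} (hb : b ≠ ∅) :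
    toBush t g = b ↔ t.graphOn g = b := by
  by_cases h : (t.graphOn g).Finite
  · simp [toBush, h, ← Finset.coe_inj]
  · refine iff_of_false (fun hg => hb ?_) fun hg => h (hg ▸ b.finite_toSet)
    rw [← hg, toBush, dif_neg h]

lemma toBush_eq_toBush_iff {t t₀ : Set (List ℕ)} (hfin : t₀.Finite) (hne : t₀.Nonempty)
    {g g₀ : List ℕ → Zd d} : toBush t g = toBush t₀ g₀ ↔ t = t₀ ∧ EqOn g g₀ t₀ := by
  have hb : toBush t₀ g₀ ≠ ∅ := by
    rw [← Finset.coe_nonempty.trans Finset.nonempty_iff_ne_empty, coe_toBush hfin]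
    simpa using hne
  rw [toBush_eq_iff hb, coe_toBush hfin]
  constructor
  · intro h
    have ht : t = t₀ := by simpa using congrArg (Prod.fst '' ·) h
    exact ⟨ht, graphOn_inj.1 (ht ▸ h)⟩
  · rintro ⟨rfl, h⟩
    exact graphOn_inj.2 h

/-- The plane tree in which the vertex `w` has `N w` children. -/
def treeOf (N : List ℕ → ℕ) : Set (List ℕ) :=
  {w | ∀ (i : ℕ) (h : i < w.length), w[i] < N (w.take i)}

/-- The positions of the vertices of a tree whose root is at the origin, when the step along the
edge above the vertex `w` is `s w`. -/
def embOf (s : List ℕ → Zd d) (w : List ℕ) : Zd d :=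
  ∑ i : Fin w.length, s (w.take (i + 1))

lemma nil_mem_treeOf (N : List ℕ → ℕ) : [] ∈ treeOf N := fun i h => absurd h (Nat.not_lt_zero i)

lemma append_singleton_mem_treeOf (N : List ℕ → ℕ) (w : List ℕ) (k : ℕ) :
    w ++ [k] ∈ treeOf N ↔ w ∈ treeOf N ∧ k < N w := by
  refine ⟨fun h => ⟨fun i hi => ?_, by simpa using h w.length (by simp)⟩, ?_⟩
  · have hi' := h i (by simp; omega)
    rwa [List.getElem_append_left hi, List.take_append_of_le_length hi.le] at hi'
  · rintro ⟨hw, hk⟩ i hi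
    rw [List.length_append, List.length_singleton, Nat.lt_succ_iff] at hi
    rcases hi.lt_or_eq with hlt | rfl
    · rw [List.getElem_append_left hlt, List.take_append_of_le_length hlt.le]
      exact hw i hlt
    · simpa using hk

lemma embOf_nil (s : List ℕ → Zd d) : embOf s [] = 0 := Finset.sum_of_isEmpty (ι := Fin 0) _

lemma embOf_append_singleton (s : List ℕ → Zd d) (w : List ℕ) (k : ℕ) :
    embOf s (w ++ [k]) = embOf s w + s (w ++ [k]) := by
  unfold embOf
  rw [← Fin.sum_congr' _ (show w.length + 1 = (w ++ [k]).length by simp), Fin.sum_univ_castSucc]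
  congr 1
  · refine Finset.sum_congr rfl fun i _ => ?_
    simp only [Fin.val_cast, Fin.val_castSucc]
    rw [List.take_append_of_le_length (by omega)]
  · rw [Fin.val_cast, Fin.val_last, List.take_of_length_le (by simp)]

lemma append_singleton_mem_iff_lt_childCount {t : Set (List ℕ)} (ht : IsPlaneTree t)
    (hfin : t.Finite) (w : List ℕ) (k : ℕ) : w ++ [k] ∈ t ↔ k < childCount t w := by
  classical
  have hex : ∃ n, w ++ [n] ∉ t :=
    (hfin.preimage (f := fun k : ℕ => w ++ [k]) fun a _ b _ h => by simpa using h).exists_notMem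
  have hchildren : {k : ℕ | w ++ [k] ∈ t} = Iio (Nat.find hex) := by
    ext j
    refine ⟨fun hj => ?_, fun hj => not_not.1 (Nat.find_min hex hj)⟩
    by_contra hle
    exact Nat.find_spec hex (ht.2.2 w _ j (not_lt.1 hle) hj)
  have hcount : childCount t w = Nat.find hex := by
    rw [childCount, hchildren, ← Nat.card_coe_set_eq]
    simp
  rw [hcount]
  exact Set.ext_iff.1 hchildren k

lemma treeOf_eq_iff {t : Set (List ℕ)} (ht : IsPlaneTree t) (hfin : t.Finite) (N : List ℕ → ℕ) :
    treeOf N = t ↔ ∀ w ∈ t, N w = childCount t w := by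
  constructor
  · rintro rfl w hw
    refine eq_of_forall_lt_iff fun k => ?_
    rw [← append_singleton_mem_iff_lt_childCount ht hfin, append_singleton_mem_treeOf,
      and_iff_right hw]
  · intro h
    ext w
    induction w using List.reverseRecOn with
    | nil => exact iff_of_true (nil_mem_treeOf N) ht.1
    | append_singleton w k ih =>
      rw [append_singleton_mem_treeOf, ih, append_singleton_mem_iff_lt_childCount ht hfin]
      refine ⟨fun ⟨hw, hk⟩ => h w hw ▸ hk, fun hk => ?_⟩
      have hw := ht.2.1 w k ((append_singleton_mem_iff_lt_childCount ht hfin w k).2 hk)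
      exact ⟨hw, (h w hw).symm ▸ hk⟩

lemma eqOn_embOf_iff {t : Set (List ℕ)} (ht : IsPlaneTree t) (g s : List ℕ → Zd d) :
    EqOn (embOf s) (fun w => g w - g []) t ↔
      ∀ w ∈ t, w ≠ [] → s w = g w - g w.dropLast := by
  constructor
  · intro h w hw hne
    obtain ⟨u, k, rfl⟩ : ∃ u k, w = u ++ [k] :=
      ⟨w.dropLast, w.getLast hne, (List.dropLast_append_getLast hne).symm⟩
    have hstep := h hw
    rw [embOf_append_singleton, h (ht.2.1 u k hw), ← eq_sub_iff_add_eq'] at hstep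
    simpa using hstep
  · intro h w
    induction w using List.reverseRecOn with
    | nil => simp [embOf_nil]
    | append_singleton w k ih =>
      intro hw
      rw [embOf_append_singleton, ih (ht.2.1 w k hw), h _ hw (by simp), List.dropLast_concat,
        add_comm, sub_add_sub_cancel]

lemma measurableSet_mem_treeOf (w : List ℕ) : MeasurableSet {N : List ℕ → ℕ | w ∈ treeOf N} := by
  have hset : {N : List ℕ → ℕ | w ∈ treeOf N} =
      ⋂ (i : ℕ) (h : i < w.length), {N | w[i] < N (w.take i)} := by
    ext N
    simp [treeOf]
  rw [hset]
  refine MeasurableSet.iInter fun i => MeasurableSet.iInter fun h => ?_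
  exact measurableSet_lt measurable_const (measurable_pi_apply (w.take i))

lemma measurable_embOf (w : List ℕ) : Measurable fun s : List ℕ → Zd d => embOf s w := by
  unfold embOf
  fun_prop

lemma measurable_toBush_treeOf_embOf :
    Measurable fun y : (List ℕ → ℕ) × (List ℕ → Zd d) => toBush (treeOf y.1) (embOf y.2) := by
  set f := fun y : (List ℕ → ℕ) × (List ℕ → Zd d) => toBush (treeOf y.1) (embOf y.2)
  have hfibre {b : Bush d} (hb : b ≠ ∅) : MeasurableSet (f ⁻¹' {b}) := by
    have hset : f ⁻¹' {b} =
        ⋂ e, {y | (e.1 ∈ treeOf y.1 ∧ embOf y.2 e.1 = e.2) ↔ e ∈ b} := by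
      ext y
      simp [f, toBush_eq_iff hb, Set.ext_iff]
    rw [hset]
    have hvertex (e : List ℕ × Zd d) : MeasurableSet
        {y : (List ℕ → ℕ) × (List ℕ → Zd d) | e.1 ∈ treeOf y.1 ∧ embOf y.2 e.1 = e.2} :=
      (measurable_fst (measurableSet_mem_treeOf e.1)).inter
        (((measurable_embOf e.1).comp measurable_snd) (measurableSet_singleton e.2))
    refine MeasurableSet.iInter fun e => ?_
    by_cases he : e ∈ b
    · simpa only [he, iff_true] using hvertex e
    · simpa only [he, iff_false] using! (hvertex e).compl
  refine measurable_to_countable' fun b => ?_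
  rcases eq_or_ne b ∅ with rfl | hb
  · have hcompl : f ⁻¹' {∅} = (⋃ b : {b : Bush d // b ≠ ∅}, f ⁻¹' {b.1})ᶜ := by
      ext y
      simp only [mem_preimage, mem_singleton_iff, mem_compl_iff, mem_iUnion, Subtype.exists,
        exists_prop, exists_eq_right', not_not]
    rw [hcompl]
    exact (MeasurableSet.iUnion fun b => hfibre b.2).compl
  · exact hfibre hb

/-- The law of the bush in which the vertex `w` has an `offspringPMF hp w`-distributed number of
children, independently of everything else, and the steps along edges are uniform. -/
def bushLaw (d : ℕ) (hp : HasMeanOne p) : Measure (Bush d) :=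
  ((Measure.infinitePi fun w => (offspringPMF hp w).toMeasure).prod
    (Measure.infinitePi fun _ => stepLaw d)).map fun y => toBush (treeOf y.1) (embOf y.2)

lemma preimage_toBush_treeOf_embOf {t : Set (List ℕ)} (ht : IsPlaneTree t) (hfin : t.Finite)
    (g : List ℕ → Zd d) :
    (fun y : (List ℕ → ℕ) × (List ℕ → Zd d) => toBush (treeOf y.1) (embOf y.2)) ⁻¹'
        {toBush t fun w => g w - g []} =
      ((hfin.toFinset : Set (List ℕ)).pi fun w => {childCount t w}) ×ˢ
        ((hfin.toFinset.erase [] : Set (List ℕ)).pi fun w => {g w - g w.dropLast}) := by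
  ext y
  simp only [mem_preimage, mem_singleton_iff, toBush_eq_toBush_iff hfin ⟨_, ht.1⟩,
    treeOf_eq_iff ht hfin, eqOn_embOf_iff ht, mem_prod, Set.mem_pi, Finite.coe_toFinset,
    Finset.coe_erase, Set.mem_sdiff, and_imp]

lemma prod_offspringPMF_childCount (hp : HasMeanOne p) {t : Set (List ℕ)} (ht : IsPlaneTree t)
    (hfin : t.Finite) :
    ∏ w ∈ hfin.toFinset, offspringPMF hp w (childCount t w) = bushWeight p t := by
  have herase : t \ {[]} = (hfin.toFinset.erase [] : Set (List ℕ)) := by simp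
  rw [bushWeight, herase, finprod_mem_coe_finset,
    ← Finset.mul_prod_erase _ _ (hfin.mem_toFinset.2 ht.1)]
  congr 1
  exact Finset.prod_congr rfl fun w hw => by
    rw [offspringPMF, if_neg (Finset.ne_of_mem_erase hw)]

variable [NeZero d]

instance isProbabilityMeasure_bushLaw (hp : HasMeanOne p) : IsProbabilityMeasure (bushLaw d hp) :=
  Measure.isProbabilityMeasure_map measurable_toBush_treeOf_embOf.aemeasurable

lemma infinitePi_offspringPMF_mem_treeOf (hp : HasMeanOne p) (v : List ℕ) :
    Measure.infinitePi (fun w => (offspringPMF hp w).toMeasure) {N | v ∈ treeOf N} =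
      wordProb hp v := by
  have hinj : Function.Injective fun i : Fin v.length => v.take i := fun i j h => by
    have := congrArg List.length h
    simp only [List.length_take] at this
    omega
  have hcyl : {N : List ℕ → ℕ | v ∈ treeOf N} =
      ((Finset.univ.image fun i : Fin v.length => v.take i : Finset (List ℕ)) : Set (List ℕ)).pi
        fun w => Ioi (v.getD w.length 0) := by
    ext N
    simp +contextual [treeOf, Set.mem_pi, Fin.forall_iff, le_of_lt]
  rw [hcyl, Measure.infinitePi_pi _ fun _ _ => .of_discrete, Finset.prod_image hinj.injOn]
  simp [wordProb]

lemma bushLaw_mem_le (hp : HasMeanOne p) (v : List ℕ) (x : Zd d) :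
    bushLaw d hp {b | (v, x) ∈ b} ≤ wordProb hp v * srwKernel d v.length x := by
  have hinj : Function.Injective fun i : Fin v.length => v.take (i + 1) := fun i j h => by
    have := congrArg List.length h
    simp only [List.length_take] at this
    omega
  rw [bushLaw, Measure.map_apply measurable_toBush_treeOf_embOf .of_discrete,
    ← infinitePi_offspringPMF_mem_treeOf, ← infinitePi_stepLaw_sum_eq hinj,
    ← Measure.prod_prod]
  refine measure_mono fun y hy => ?_
  have hb : toBush (treeOf y.1) (embOf y.2) ≠ ∅ := Finset.ne_empty_of_mem hy
  have hmem := (Set.ext_iff.1 ((toBush_eq_iff hb).1 rfl) (v, x)).2 hy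
  exact mem_graphOn.1 hmem

lemma bushLaw_singleton (hp : HasMeanOne p) {t : Set (List ℕ)} (ht : IsPlaneTree t)
    (hfin : t.Finite) {g : List ℕ → Zd d} (hg : IsBRWEmbedding t g) :
    bushLaw d hp {toBush t fun w => g w - g []} =
      bushWeight p t * ((2 * d : ℕ) : ℝ≥0∞)⁻¹ ^ (t.ncard - 1) := by
  rw [bushLaw, Measure.map_apply measurable_toBush_treeOf_embOf .of_discrete,
    preimage_toBush_treeOf_embOf ht hfin, Measure.prod_prod,
    Measure.infinitePi_pi _ fun _ _ => measurableSet_singleton _,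
    Measure.infinitePi_pi _ fun _ _ => measurableSet_singleton _,
    ← prod_offspringPMF_childCount hp ht hfin, ncard_eq_toFinset_card t hfin,
    ← Finset.card_erase_of_mem (hfin.mem_toFinset.2 ht.1)]
  congr 1
  · exact Finset.prod_congr rfl fun w _ =>
      PMF.toMeasure_apply_singleton _ _ (measurableSet_singleton _)
  · refine Finset.prod_eq_pow_card fun w hw => stepLaw_singleton (hg w ?_ ?_)
    · exact hfin.mem_toFinset.1 (Finset.mem_of_mem_erase hw)
    · exact Finset.ne_of_mem_erase hw

end Bush

/-! ### Maps to a countable space and infinite product measures -/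

section CountableMap

lemma preimage_image_restrict_of_dependsOn {ι E : Type*} {S : Finset ι}
    {A : Set (ι → E)} (hA : DependsOn (· ∈ A) S) : S.restrict ⁻¹' (S.restrict '' A) = A := by
  refine subset_antisymm ?_ (subset_preimage_image _ _)
  rintro y ⟨x, hx, hxy⟩
  exact (hA fun i hi => congrFun hxy ⟨i, hi⟩).mp hx

variable {Ω E ι : Type*} [MeasurableSpace Ω] [MeasurableSpace E]

lemma nullMeasurableSet_of_add_compl_le {P : Measure Ω} [IsProbabilityMeasure P] {S : Set Ω}
    (h : P S + P Sᶜ ≤ 1) : NullMeasurableSet S P := by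
  have hcover : toMeasurable P S ∪ toMeasurable P Sᶜ = univ :=
    univ_subset_iff.1 <| (union_compl_self S).symm.subset.trans <|
      union_subset_union (subset_toMeasurable P S) (subset_toMeasurable P Sᶜ)
  have hinter : P (toMeasurable P S ∩ toMeasurable P Sᶜ) = 0 := by
    have hsum := measure_union_add_inter (μ := P) (toMeasurable P S)
      (measurableSet_toMeasurable P Sᶜ)
    rw [hcover, measure_univ, measure_toMeasurable, measure_toMeasurable] at hsum
    have hle := (hsum.trans_le h).trans_eq (add_zero 1).symm
    exact nonpos_iff_eq_zero.1 ((ENNReal.add_le_add_iff_left ENNReal.one_ne_top).1 hle)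
  refine ⟨toMeasurable P S, measurableSet_toMeasurable P S, ae_eq_set.2 ⟨?_, ?_⟩⟩
  · simp [sdiff_eq_empty.2 (subset_toMeasurable P S)]
  · have hsub : toMeasurable P S \ S ⊆ toMeasurable P S ∩ toMeasurable P Sᶜ := fun ω hω =>
      ⟨hω.1, subset_toMeasurable P Sᶜ hω.2⟩
    exact measure_mono_null hsub hinter

lemma measure_preimage_le_of_fibre_le [Countable E] [DiscreteMeasurableSpace E] {P : Measure Ω}
    {ρ : Measure E} {f : Ω → E} (h : ∀ ω, P (f ⁻¹' {f ω}) ≤ ρ {f ω}) (A : Set E) :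
    P (f ⁻¹' A) ≤ ρ A := by
  have hfibre (c : E) : P (f ⁻¹' {c}) ≤ ρ {c} := by
    rcases (f ⁻¹' {c}).eq_empty_or_nonempty with hempty | ⟨ω, rfl⟩
    · simp [hempty]
    · exact h ω
  calc P (f ⁻¹' A) = P (⋃ c ∈ A, f ⁻¹' {c}) := by rw [biUnion_preimage_singleton]
    _ ≤ ∑' c : A, P (f ⁻¹' {c.1}) := measure_biUnion_le P A.to_countable _
    _ ≤ ∑' c : A, ρ {c.1} := ENNReal.tsum_le_tsum fun c => hfibre c
    _ = ρ A := by
      rw [← measure_biUnion A.to_countable (fun a _ b _ hab => by simpa using hab)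
        fun _ _ => .of_discrete, biUnion_of_singleton]

variable {P : Measure Ω} [IsProbabilityMeasure P] {ρ : Measure E} [IsProbabilityMeasure ρ]
  {f : Ω → E}

lemma aemeasurable_of_measure_preimage_le [Countable E] [DiscreteMeasurableSpace E]
    (h : ∀ A, P (f ⁻¹' A) ≤ ρ A) : AEMeasurable f P := by
  have hnull : NullMeasurable f P := fun A _ => nullMeasurableSet_of_add_compl_le <| by
    rw [← measure_univ (μ := ρ), ← measure_add_measure_compl (.of_discrete (s := A))]
    exact add_le_add (h A) (h Aᶜ)
  exact hnull.aemeasurable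

lemma map_eq_of_measure_preimage_le (hf : AEMeasurable f P) (h : ∀ A, P (f ⁻¹' A) ≤ ρ A) :
    P.map f = ρ := by
  have := Measure.isProbabilityMeasure_map hf
  refine Measure.eq_of_le_of_isProbabilityMeasure (Measure.le_iff.2 fun A hA => ?_)
  rw [Measure.map_apply_of_aemeasurable hf hA]
  exact h A

lemma infinitePi_prod_infinitePi_map_zip {F : Type*} [MeasurableSpace F] (μ : ι → Measure E)
    (ν : ι → Measure F) [∀ i, IsProbabilityMeasure (μ i)] [∀ i, IsProbabilityMeasure (ν i)] :
    ((Measure.infinitePi μ).prod (Measure.infinitePi ν)).map (fun y i => (y.1 i, y.2 i)) =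
      Measure.infinitePi fun i => (μ i).prod (ν i) := by
  refine IsProjectiveLimit.unique (fun I => ?_) (Measure.isProjectiveLimit_infinitePi _)
  have hzip := (measurePreserving_arrowProdEquivProdArrow E F I (fun i => μ i)
    (fun i => ν i)).symm.map_eq
  rw [← hzip, ← Measure.infinitePi_map_restrict, ← Measure.infinitePi_map_restrict,
    Measure.map_prod_map _ _ (by fun_prop) (by fun_prop),
    Measure.map_map (by fun_prop) (by fun_prop), Measure.map_map (by fun_prop) (by fun_prop)]
  rfl

lemma infinitePi_const_map_add_right [AddGroup ι] (μ : Measure E) [IsProbabilityMeasure μ]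
    (c : ι) :
    (Measure.infinitePi fun _ : ι => μ).map (fun x k => x (k + c)) =
      Measure.infinitePi fun _ => μ :=
  Measure.map_infinitePi_infinitePi_of_inj (P := fun _ : ι => μ) (add_left_injective c)

variable [Countable E] [DiscreteMeasurableSpace E]

lemma measurableSet_of_dependsOn {S : Finset ι} {A : Set (ι → E)} (hA : DependsOn (· ∈ A) S) :
    MeasurableSet A := by
  rw [← preimage_image_restrict_of_dependsOn hA]
  exact S.measurable_restrict .of_discrete

lemma infinitePi_inter_of_dependsOn (μ : ι → Measure E) [∀ i, IsProbabilityMeasure (μ i)]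
    {S T : Finset ι} (hST : Disjoint S T) {A B : Set (ι → E)} (hA : DependsOn (· ∈ A) S)
    (hB : DependsOn (· ∈ B) T) :
    Measure.infinitePi μ (A ∩ B) = Measure.infinitePi μ A * Measure.infinitePi μ B := by
  have hindep := (ProbabilityTheory.iIndepFun_infinitePi (P := μ) (X := fun _ => id)
    fun _ => measurable_id).indepFun_finset S T hST measurable_pi_apply
  rw [← preimage_image_restrict_of_dependsOn hA, ← preimage_image_restrict_of_dependsOn hB]
  exact hindep.measure_inter_preimage_eq_mul _ _ .of_discrete .of_discrete

end CountableMap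

/-! ### The cells of the model -/

section Cell

variable {d : ℕ} {p : PMF ℕ}

/-- The part of the model at one index of the backbone: the step of the backbone from that index to
the next one, and the bush attached there. -/
abbrev Cell (d : ℕ) : Type := Zd d × Bush d

/-- The law of one cell: a uniform step and an independent bush. -/
def cellLaw (d : ℕ) (hp : HasMeanOne p) : Measure (Cell d) := (stepLaw d).prod (bushLaw d hp)

/-- The law of an independent sequence of cells. -/
def cellSeqLaw (d : ℕ) (hp : HasMeanOne p) : Measure (ℤ → Cell d) :=
  Measure.infinitePi fun _ => cellLaw d hp

instance isProbabilityMeasure_cellLaw [NeZero d] (hp : HasMeanOne p) :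
    IsProbabilityMeasure (cellLaw d hp) :=
  inferInstanceAs (IsProbabilityMeasure ((stepLaw d).prod (bushLaw d hp)))

instance isProbabilityMeasure_cellSeqLaw [NeZero d] (hp : HasMeanOne p) :
    IsProbabilityMeasure (cellSeqLaw d hp) :=
  inferInstanceAs (IsProbabilityMeasure (Measure.infinitePi fun _ => cellLaw d hp))

end Cell

lemma eqOn_Icc_of_sub_eq {G : Type*} [AddGroup G] {f g : ℤ → G} {N : ℤ} (h0 : f 0 = g 0)
    (h : ∀ k ∈ Ico (-N) N, f (k + 1) - f k = g (k + 1) - g k) : EqOn f g (Icc (-N) N) := by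
  intro k hk
  rcases le_total 0 k with hpos | hneg
  · induction k, hpos using Int.leInduction with
    | base => exact h0
    | succ k _ ih =>
      have hstep := h k ⟨by grind, by grind⟩
      rw [ih ⟨by grind, by grind⟩] at hstep
      exact sub_left_injective hstep
  · induction k, hneg using Int.leInductionDown with
    | base => exact h0
    | pred k _ ih =>
      have hstep := h (k - 1) ⟨by grind, by grind⟩
      rw [sub_add_cancel, ih ⟨by grind, by grind⟩] at hstep
      exact sub_right_injective hstep

namespace BiInfModel

variable {d : ℕ} {p : PMF ℕ} (M : BiInfModel d p)

instance measurableSpaceΩ : MeasurableSpace M.Ω := M.mΩ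

instance isProbabilityMeasureP : IsProbabilityMeasure M.P := M.hP

/-- The sequence of the cells of a sample of the model. -/
def cells (ω : M.Ω) (n : ℤ) : Cell d :=
  (M.walk (n + 1) ω - M.walk n ω, toBush (M.btree n ω) fun w => M.bemb n ω w - M.bemb n ω [])

lemma mem_cells {ω : M.Ω} {n : ℤ} {e : List ℕ × Zd d} :
    e ∈ (M.cells ω n).2 ↔ e.1 ∈ M.btree n ω ∧ M.bemb n ω e.1 = M.walk n ω + e.2 := by
  rw [cells, mem_toBush (M.hbtree n ω).2, M.hbroot, sub_eq_iff_eq_add']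

lemma forall_cells_eq_iff (N : ℕ) (ω₀ ω : M.Ω) :
    (∀ k ∈ Finset.Ico (-(N : ℤ)) N, M.cells ω k = M.cells ω₀ k) ↔
      (∀ k : ℤ, -(N : ℤ) ≤ k → k ≤ (N : ℤ) → M.walk k ω = M.walk k ω₀) ∧
        ∀ m ∈ Finset.Ico (-(N : ℤ)) N, M.btree m ω = M.btree m ω₀ ∧
          ∀ v ∈ M.btree m ω₀, M.bemb m ω v = M.bemb m ω₀ v := by
  have hbush (m : ℤ) (hm : M.walk m ω = M.walk m ω₀) :
      (M.cells ω m).2 = (M.cells ω₀ m).2 ↔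
        M.btree m ω = M.btree m ω₀ ∧ ∀ v ∈ M.btree m ω₀, M.bemb m ω v = M.bemb m ω₀ v := by
    obtain ⟨htree, hfin⟩ := M.hbtree m ω₀
    simp only [cells, toBush_eq_toBush_iff hfin ⟨_, htree.1⟩, EqOn, M.hbroot, hm, sub_left_inj]
  constructor
  · intro h
    have hwalk := eqOn_Icc_of_sub_eq (f := fun k => M.walk k ω) (g := fun k => M.walk k ω₀)
      (by simp only [M.hwalk0]) fun k hk => congrArg Prod.fst (h k (Finset.mem_Ico.2 hk))
    refine ⟨fun k hk hk' => hwalk ⟨hk, hk'⟩, fun m hm => ?_⟩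
    obtain ⟨hm₁, hm₂⟩ := Finset.mem_Ico.1 hm
    exact (hbush m (hwalk ⟨hm₁, hm₂.le⟩)).1 (congrArg Prod.snd (h m hm))
  · rintro ⟨hwalk, htree⟩ k hk
    obtain ⟨hk₁, hk₂⟩ := Finset.mem_Ico.1 hk
    have hwalk_k := hwalk k hk₁ hk₂.le
    refine Prod.ext ?_ ((hbush k hwalk_k).2 (htree k hk))
    simp only [cells, hwalk_k, hwalk (k + 1) (by omega) (by omega)]

variable [NeZero d]

lemma cellLaw_singleton_cells (hp : HasMeanOne p) (ω : M.Ω) (n : ℤ) :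
    cellLaw d hp {M.cells ω n} = ((2 * d : ℕ) : ℝ≥0∞)⁻¹ *
      (bushWeight p (M.btree n ω) * ((2 * d : ℕ) : ℝ≥0∞)⁻¹ ^ ((M.btree n ω).ncard - 1)) := by
  rw [cellLaw, cells, ← singleton_prod_singleton, Measure.prod_prod,
    stepLaw_singleton (M.hstep n ω),
    bushLaw_singleton hp (M.hbtree n ω).1 (M.hbtree n ω).2 (M.hbemb n ω)]

lemma measure_restrict_cells_eq (hp : HasMeanOne p) (N : ℕ) (ω₀ : M.Ω) :
    M.P ((fun ω => (Finset.Ico (-(N : ℤ)) N).restrict (M.cells ω)) ⁻¹'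
        {(Finset.Ico (-(N : ℤ)) N).restrict (M.cells ω₀)}) =
      Measure.pi (fun _ => cellLaw d hp) {(Finset.Ico (-(N : ℤ)) N).restrict (M.cells ω₀)} := by
  set J := Finset.Ico (-(N : ℤ)) N with hJ
  have hfibre : (fun ω => J.restrict (M.cells ω)) ⁻¹' {J.restrict (M.cells ω₀)} =
      {ω | (∀ k : ℤ, -(N : ℤ) ≤ k → k ≤ (N : ℤ) → M.walk k ω = M.walk k ω₀) ∧
        ∀ m ∈ J, M.btree m ω = M.btree m ω₀ ∧
          ∀ v ∈ M.btree m ω₀, M.bemb m ω v = M.bemb m ω₀ v} := by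
    ext ω
    rw [mem_ofPred_eq, ← M.forall_cells_eq_iff N ω₀ ω, mem_preimage, mem_singleton_iff,
      funext_iff, Subtype.forall]
    rfl
  have hcard : J.card = 2 * N := by
    rw [hJ, Int.card_Ico]
    omega
  have hlaw := M.hlaw N (fun k => M.walk k ω₀) (M.hwalk0 ω₀) (fun k _ _ => M.hstep k ω₀) J
    (fun m hm => by grind) (fun m => M.btree m ω₀) (fun m _ => M.hbtree m ω₀)
    (fun m => M.bemb m ω₀) fun m _ => ⟨M.hbroot m ω₀, M.hbemb m ω₀⟩
  rw [hfibre, hlaw, Measure.pi_singleton]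
  simp only [Finset.restrict]
  rw [J.prod_coe_sort fun i => cellLaw d hp {M.cells ω₀ i}]
  simp only [cellLaw_singleton_cells, Finset.prod_mul_distrib, Finset.prod_const, hcard]

lemma measure_preimage_restrict_cells_le (hp : HasMeanOne p) (N : ℕ)
    (A : Set (Finset.Ico (-(N : ℤ)) N → Cell d)) :
    M.P ((fun ω => (Finset.Ico (-(N : ℤ)) N).restrict (M.cells ω)) ⁻¹' A) ≤
      Measure.pi (fun _ => cellLaw d hp) A :=
  measure_preimage_le_of_fibre_le (fun ω₀ => (M.measure_restrict_cells_eq hp N ω₀).le) A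

lemma aemeasurable_restrict_cells (hp : HasMeanOne p) (N : ℕ) :
    AEMeasurable (fun ω => (Finset.Ico (-(N : ℤ)) N).restrict (M.cells ω)) M.P :=
  aemeasurable_of_measure_preimage_le (M.measure_preimage_restrict_cells_le hp N)

lemma aemeasurable_cells (hp : HasMeanOne p) : AEMeasurable M.cells M.P := by
  refine aemeasurable_pi_iff.2 fun k => ?_
  exact aemeasurable_pi_iff.1 (M.aemeasurable_restrict_cells hp (k.natAbs + 1))
    ⟨k, Finset.mem_Ico.2 (by omega)⟩

lemma map_cells (hp : HasMeanOne p) : M.P.map M.cells = cellSeqLaw d hp := by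
  have hae := M.aemeasurable_cells hp
  have := Measure.isProbabilityMeasure_map hae
  have hwindow (N : ℕ) : (M.P.map M.cells).map (Finset.Ico (-(N : ℤ)) N).restrict =
      Measure.pi fun _ => cellLaw d hp := by
    rw [AEMeasurable.map_map_of_aemeasurable (Finset.measurable_restrict _).aemeasurable hae]
    exact map_eq_of_measure_preimage_le (M.aemeasurable_restrict_cells hp N)
      (M.measure_preimage_restrict_cells_le hp N)
  refine IsProjectiveLimit.unique (fun I => ?_) (Measure.isProjectiveLimit_infinitePi _)
  obtain ⟨N, hN⟩ : ∃ N : ℕ, I ⊆ Finset.Ico (-(N : ℤ)) N := by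
    refine ⟨I.sup (fun k => k.natAbs + 1), fun k hk => ?_⟩
    have := I.le_sup (f := fun k : ℤ => k.natAbs + 1) hk
    grind
  rw [← Finset.restrict₂_comp_restrict hN, ← Measure.map_map (Finset.measurable_restrict₂ hN)
    (Finset.measurable_restrict _), hwindow]
  exact (isProjectiveMeasureFamily_pi (fun _ => cellLaw d hp) _ I hN).symm

end BiInfModel

/-! ### Meetings of bushes -/

section Meeting

variable {d : ℕ} {p : PMF ℕ}

/-- The bushes attached at the indices `m` and `m + l` of the backbone have a common vertex in
`ℤ^d`. -/
def BushesMeet (x : ℤ → Cell d) (m : ℤ) (l : ℕ) : Prop :=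
  ∃ e ∈ (x m).2, ∃ e' ∈ (x (m + l)).2, e.2 = (∑ k : Fin l, (x (m + (k : ℕ))).1) + e'.2

/-- A bush at an index at most `m` meets a bush at an index at least `m + n`. -/
def FarBushesMeet (x : ℤ → Cell d) (m : ℤ) (n : ℕ) : Prop :=
  ∃ a b : ℕ, BushesMeet x (m - a) (n + a + b)

/-- A bush at one of the last `L` indices up to `j` meets a bush at one of the next `L` indices. -/
def NearBushesMeet (x : ℤ → Cell d) (j : ℤ) (L : ℕ) : Prop :=
  ∃ a < L, ∃ b < L, BushesMeet x (j - a) (a + b + 1)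

lemma bushesMeet_comp_add_right (x : ℤ → Cell d) (g m : ℤ) (l : ℕ) :
    BushesMeet (fun k => x (k + g)) m l ↔ BushesMeet x (m + g) l := by
  simp only [BushesMeet, add_right_comm _ g]

lemma dependsOn_bushesMeet (m : ℤ) (l : ℕ) :
    DependsOn (· ∈ {x : ℤ → Cell d | BushesMeet x m l}) (Finset.Icc m (m + l)) := by
  intro x y hxy
  have hstep (k : Fin l) : x (m + (k : ℕ)) = y (m + (k : ℕ)) :=
    hxy _ (Finset.mem_coe.2 (Finset.mem_Icc.2 (by omega)))
  simp only [mem_ofPred_eq, BushesMeet, hstep, hxy m (by simp), hxy (m + l) (by simp)]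

lemma dependsOn_nearBushesMeet (j : ℤ) (L : ℕ) :
    DependsOn (· ∈ {x : ℤ → Cell d | NearBushesMeet x j L}) (Finset.Ioc (j - L) (j + L)) := by
  intro x y hxy
  have hmeet (a : ℕ) (ha : a < L) (b : ℕ) (hb : b < L) :
      BushesMeet x (j - a) (a + b + 1) ↔ BushesMeet y (j - a) (a + b + 1) :=
    (dependsOn_bushesMeet (j - a) (a + b + 1) fun k hk => hxy k (by grind)).to_iff
  exact propext <| exists_congr fun a => and_congr_right fun ha => exists_congr fun b =>
    and_congr_right fun hb => hmeet a ha b hb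

lemma measurableSet_bushesMeet (m : ℤ) (l : ℕ) :
    MeasurableSet {x : ℤ → Cell d | BushesMeet x m l} :=
  measurableSet_of_dependsOn (dependsOn_bushesMeet m l)

variable [NeZero d]

lemma cellSeqLaw_mem_mem_sum_eq_le (hp : HasMeanOne p) (m : ℤ) {l : ℕ} (hl : l ≠ 0)
    (u v : List ℕ) (X Y z : Zd d) :
    cellSeqLaw d hp {x | (u, X) ∈ (x m).2 ∧ (v, Y) ∈ (x (m + l)).2 ∧
        ∑ k : Fin l, (x (m + (k : ℕ))).1 = z} ≤
      srwKernel d l z * ((wordProb hp u * srwKernel d u.length X) *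
        (wordProb hp v * srwKernel d v.length Y)) := by
  have hne : m + (l : ℤ) ≠ m := by omega
  have hinj : Function.Injective fun k : Fin l => m + ((k : ℕ) : ℤ) := fun a b hab => by
    simpa [Fin.ext_iff] using hab
  have hmeas : MeasurableSet {x : ℤ → Cell d | (u, X) ∈ (x m).2 ∧ (v, Y) ∈ (x (m + l)).2 ∧
      ∑ k : Fin l, (x (m + (k : ℕ))).1 = z} := by
    refine measurableSet_of_dependsOn (S := Finset.Icc m (m + l)) fun x y hxy => ?_
    have hstep (k : Fin l) : x (m + (k : ℕ)) = y (m + (k : ℕ)) :=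
      hxy _ (Finset.mem_coe.2 (Finset.mem_Icc.2 (by omega)))
    simp only [mem_ofPred_eq, hstep, hxy m (by simp), hxy (m + l) (by simp)]
  have hprod : (fun (y : (ℤ → Zd d) × (ℤ → Bush d)) (i : ℤ) => ((y.1 i, y.2 i) : Cell d)) ⁻¹'
        {x | (u, X) ∈ (x m).2 ∧ (v, Y) ∈ (x (m + l)).2 ∧
          ∑ k : Fin l, (x (m + (k : ℕ))).1 = z} =
      {y | ∑ k : Fin l, y (m + (k : ℕ)) = z} ×ˢ (({m, m + (l : ℤ)} : Finset ℤ) : Set ℤ).pi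
        fun k => if k = m then {b | (u, X) ∈ b} else {b | (v, Y) ∈ b} := by
    ext y
    simp [hne, and_comm, and_assoc]
  unfold cellSeqLaw cellLaw
  rw [← infinitePi_prod_infinitePi_map_zip, Measure.map_apply (by fun_prop) hmeas, hprod,
    Measure.prod_prod, infinitePi_stepLaw_sum_eq hinj,
    Measure.infinitePi_pi _ fun _ _ => .of_discrete, Finset.prod_pair hne.symm, if_pos rfl,
    if_neg hne]
  gcongr <;> exact bushLaw_mem_le ..

lemma cellSeqLaw_bushesMeet_le (hp : HasMeanOne p) (m : ℤ) {l : ℕ} (hl : l ≠ 0) :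
    cellSeqLaw d hp {x | BushesMeet x m l} ≤
      bushConst hp * bushConst hp * ∑' (a : ℕ) (b : ℕ), srwKernel d (a + l + b) 0 := by
  have hsub : {x : ℤ → Cell d | BushesMeet x m l} ⊆ ⋃ (u : List ℕ) (v : List ℕ) (X : Zd d)
      (z : Zd d), {x | (u, X) ∈ (x m).2 ∧ (v, X - z) ∈ (x (m + l)).2 ∧
        ∑ k : Fin l, (x (m + (k : ℕ))).1 = z} := by
    rintro x ⟨⟨u, X⟩, hu, ⟨v, Y⟩, hv, hXY⟩
    simp only [mem_iUnion]
    exact ⟨u, v, X, _, hu, by rwa [sub_eq_of_eq_add' hXY], rfl⟩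
  calc cellSeqLaw d hp {x | BushesMeet x m l}
      ≤ ∑' (u : List ℕ) (v : List ℕ) (X : Zd d) (z : Zd d),
          cellSeqLaw d hp {x | (u, X) ∈ (x m).2 ∧ (v, X - z) ∈ (x (m + l)).2 ∧
            ∑ k : Fin l, (x (m + (k : ℕ))).1 = z} := by
        refine (measure_mono hsub).trans ?_
        refine (measure_iUnion_le _).trans (ENNReal.tsum_le_tsum fun u => ?_)
        refine (measure_iUnion_le _).trans (ENNReal.tsum_le_tsum fun v => ?_)
        exact (measure_iUnion_le _).trans (ENNReal.tsum_le_tsum fun X => measure_iUnion_le _)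
    _ ≤ ∑' (u : List ℕ) (v : List ℕ) (X : Zd d) (z : Zd d), wordProb hp u * (wordProb hp v *
          (srwKernel d u.length X * srwKernel d l z * srwKernel d v.length (X - z))) := by
        gcongr with u v X z
        exact (cellSeqLaw_mem_mem_sum_eq_le hp m hl u v X (X - z) z).trans_eq (by ring)
    _ = ∑' u : List ℕ, wordProb hp u * ∑' v : List ℕ, wordProb hp v *
          srwKernel d (u.length + l + v.length) 0 := by
        simp only [ENNReal.tsum_mul_left, tsum_srwKernel_mul_mul_sub]
    _ ≤ ∑' u : List ℕ, wordProb hp u *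
          (bushConst hp * ∑' b, srwKernel d (u.length + l + b) 0) := by
        gcongr with u
        exact tsum_wordProb_mul_le hp fun b => srwKernel d (u.length + l + b) 0
    _ ≤ bushConst hp * ∑' a, bushConst hp * ∑' b, srwKernel d (a + l + b) 0 :=
        tsum_wordProb_mul_le hp fun a => bushConst hp * ∑' b, srwKernel d (a + l + b) 0
    _ = bushConst hp * bushConst hp * ∑' (a : ℕ) (b : ℕ), srwKernel d (a + l + b) 0 := by
        rw [ENNReal.tsum_mul_left, mul_assoc]

/-- The union bound for the probability of `FarBushesMeet x m n` under `cellSeqLaw d hp`. -/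
def farMeetBound (d : ℕ) (hp : HasMeanOne p) (n : ℕ) : ℝ≥0∞ :=
  ∑' (a : ℕ) (b : ℕ), bushConst hp * bushConst hp *
    ∑' (a' : ℕ) (b' : ℕ), srwKernel d (n + a + b + a' + b') 0

lemma cellSeqLaw_farBushesMeet_le (hp : HasMeanOne p) (m : ℤ) {n : ℕ} (hn : n ≠ 0) :
    cellSeqLaw d hp {x | FarBushesMeet x m n} ≤ farMeetBound d hp n := by
  simp only [FarBushesMeet, ofPred_exists]
  refine (measure_iUnion_le _).trans (ENNReal.tsum_le_tsum fun a => ?_)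
  refine (measure_iUnion_le _).trans (ENNReal.tsum_le_tsum fun b => ?_)
  simpa only [add_comm (n + a + b)] using
    cellSeqLaw_bushesMeet_le hp (m - a) (l := n + a + b) (by omega)

lemma hasPolyDecay_farMeetBound (hd : 8 < d) (hp : HasMeanOne p) (hsq : FiniteSecondMoment p) :
    HasPolyDecay (((d : ℝ) - 8) / 2) (farMeetBound d hp) := by
  have hd' : (8 : ℝ) < d := by exact_mod_cast hd
  have hconst := bushConst_ne_top hp hsq
  have hmeet := (((hasPolyDecay_srwKernel d 0).tsum_tail (t := (d : ℝ) / 2 - 1) (by linarith)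
    (by ring)).tsum_tail (t := (d : ℝ) / 2 - 2) (by linarith) (by ring)).const_mul
    (ENNReal.mul_ne_top hconst hconst)
  exact (hmeet.tsum_tail (t := (d : ℝ) / 2 - 3) (by linarith) (by ring)).tsum_tail
    (by linarith) (by ring)

end Meeting

/-! ### Stationary random subsets of ℤ -/

section StationarySubset

/-- Invariance under translations of the law `ρ` of a random subset of `ℤ`. -/
def IsTranslationInvariant (ρ : Measure (Set ℤ)) : Prop :=
  ∀ g : ℤ, ρ.map (fun S => (· + g) ⁻¹' S) = ρ

/-- The event that a random subset of `ℤ` has no point strictly between `a` and `b`. -/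
def voidEvent (a b : ℤ) : Set (Set ℤ) := {S | Disjoint S (Ioo a b)}

/-- The event that `a` is a point of a random subset of `ℤ`, followed by a gap of length at least
`n`. -/
def gapEvent (a : ℤ) (n : ℕ) : Set (Set ℤ) := {S | a ∈ S} ∩ voidEvent a (a + n)

/-- The number of points of `S` in `(a, b]` if `a ≤ b`, and minus the number of points in `(b, a]`
if `b ≤ a`. -/
def signedCount (S : Set ℤ) (a b : ℤ) : ℤ :=
  ∑ j ∈ Finset.Ioc a b, S.indicator 1 j - ∑ j ∈ Finset.Ioc b a, S.indicator 1 j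

/-- `γ` enumerates `S` increasingly, `γ 1` being the smallest positive point. -/
structure IsEnumeration (γ : ℤ → ℤ) (S : Set ℤ) : Prop where
  strictMono : StrictMono γ
  range_eq : range γ = S
  nonpos : γ 0 ≤ 0
  pos : 0 < γ 1

lemma mem_voidEvent {S : Set ℤ} {a b : ℤ} :
    S ∈ voidEvent a b ↔ ∀ j, a < j → j < b → j ∉ S :=
  ⟨fun h _ ha hb hj => disjoint_left.1 h hj ⟨ha, hb⟩,
    fun h => disjoint_left.2 fun j hj hab => h j hab.1 hab.2 hj⟩

lemma voidEvent_anti {a b a' b' : ℤ} (ha : a ≤ a') (hb : b' ≤ b) :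
    voidEvent a b ⊆ voidEvent a' b' :=
  fun _ hS => Disjoint.mono_right (Ioo_subset_Ioo ha hb) hS

lemma preimage_add_right_mem_voidEvent {S : Set ℤ} {g a b : ℤ} :
    (· + g) ⁻¹' S ∈ voidEvent a b ↔ S ∈ voidEvent (a + g) (b + g) := by
  simp only [mem_voidEvent, mem_preimage]
  exact ⟨fun h j ha hb => by simpa using h (j - g) (by omega) (by omega),
    fun h j ha hb => h (j + g) (by omega) (by omega)⟩

lemma preimage_add_right_mem_gapEvent {S : Set ℤ} {g a : ℤ} {n : ℕ} :
    (· + g) ⁻¹' S ∈ gapEvent a n ↔ S ∈ gapEvent (a + g) n := by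
  simp only [gapEvent, mem_inter_iff, mem_ofPred_eq, preimage_add_right_mem_voidEvent,
    mem_preimage, add_right_comm]

lemma measurableSet_setOf_mem (j : ℤ) : MeasurableSet {S : Set ℤ | j ∈ S} :=
  measurableSet_setOfPred.2 (measurable_set_mem j)

lemma measurableSet_voidEvent (a b : ℤ) : MeasurableSet (voidEvent a b) := by
  have hinter : voidEvent a b = ⋂ j ∈ Ioo a b, {S | j ∈ S}ᶜ := by
    ext S
    simp [mem_voidEvent]
  rw [hinter]
  exact .biInter (to_countable _) fun j _ => (measurableSet_setOf_mem j).compl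

lemma measurableSet_gapEvent (a : ℤ) (n : ℕ) : MeasurableSet (gapEvent a n) :=
  (measurableSet_setOf_mem a).inter (measurableSet_voidEvent _ _)

lemma measurable_preimage_add_right (g : ℤ) :
    Measurable fun S : Set ℤ => (· + g) ⁻¹' S :=
  measurable_set_iff.2 fun j => measurable_set_mem (j + g)

lemma measurable_signedCount (a b : ℤ) : Measurable fun S => signedCount S a b := by
  classical
  have hind (j : ℤ) : Measurable fun S : Set ℤ => S.indicator (1 : ℤ → ℤ) j :=
    Measurable.ite (measurableSet_setOf_mem j) measurable_const measurable_const
  unfold signedCount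
  fun_prop

lemma signedCount_preimage_add_right (S : Set ℤ) (g a b : ℤ) :
    signedCount ((· + g) ⁻¹' S) a b = signedCount S (a + g) (b + g) := by
  have hsum (a b : ℤ) : ∑ j ∈ Finset.Ioc a b, ((· + g) ⁻¹' S).indicator (1 : ℤ → ℤ) j =
      ∑ j ∈ Finset.Ioc (a + g) (b + g), S.indicator 1 j := by
    rw [← Finset.map_add_right_Ioc, Finset.sum_map]
    rfl
  rw [signedCount, signedCount, hsum, hsum]

lemma signedCount_lt_of_lt {S : Set ℤ} {a a' : ℤ} (haa' : a < a') (ha' : a' ∈ S) (b : ℤ) :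
    signedCount S a' b < signedCount S a b := by
  have hnonneg (j : ℤ) : 0 ≤ S.indicator (1 : ℤ → ℤ) j := indicator_nonneg (by simp) j
  have hpos : 0 < S.indicator (1 : ℤ → ℤ) a' := by simp [ha']
  have hleft : Finset.Ioc a' b ⊆ Finset.Ioc a b := Finset.Ioc_subset_Ioc_left haa'.le
  have hright : Finset.Ioc b a ⊆ Finset.Ioc b a' := Finset.Ioc_subset_Ioc_right haa'.le
  unfold signedCount
  rcases le_or_gt a' b with hab | hab
  · exact Int.sub_lt_sub_of_lt_of_le
      (Finset.sum_lt_sum_of_subset hleft (by grind) (by simp) hpos fun j _ _ => hnonneg j)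
      (Finset.sum_le_sum_of_subset_of_nonneg hright fun j _ _ => hnonneg j)
  · exact Int.sub_lt_sub_of_le_of_lt
      (Finset.sum_le_sum_of_subset_of_nonneg hleft fun j _ _ => hnonneg j)
      (Finset.sum_lt_sum_of_subset hright (by grind) (by grind) hpos fun j _ _ => hnonneg j)

lemma IsEnumeration.signedCount_eq {γ : ℤ → ℤ} {S : Set ℤ} (hγ : IsEnumeration γ S) (i : ℤ) :
    signedCount S (γ 0) (γ i) = i := by
  have hsum (a b : ℤ) :
      ∑ j ∈ Finset.Ioc (γ a) (γ b), S.indicator (1 : ℤ → ℤ) j = ((b - a).toNat : ℤ) := by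
    classical
    have hfilter : {j ∈ Finset.Ioc (γ a) (γ b) | j ∈ S} =
        (Finset.Ioc a b).map ⟨γ, hγ.strictMono.injective⟩ := by
      ext j
      simp only [Finset.mem_filter, Finset.mem_Ioc, Finset.mem_map, ← hγ.range_eq, mem_range,
        Function.Embedding.coeFn_mk]
      constructor
      · rintro ⟨hj, k, rfl⟩
        exact ⟨k, by simpa only [hγ.strictMono.lt_iff_lt, hγ.strictMono.le_iff_le] using hj, rfl⟩
      · rintro ⟨k, hk, rfl⟩
        exact ⟨by simpa only [hγ.strictMono.lt_iff_lt, hγ.strictMono.le_iff_le] using hk, k, rfl⟩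
    rw [← Int.card_Ioc, ← Finset.card_map, ← hfilter, Finset.card_filter]
    push_cast
    rfl
  rw [signedCount, hsum, hsum]
  omega

lemma IsEnumeration.mem {γ : ℤ → ℤ} {S : Set ℤ} (hγ : IsEnumeration γ S) (i : ℤ) : γ i ∈ S :=
  hγ.range_eq ▸ mem_range_self i

lemma IsEnumeration.mem_voidEvent_succ {γ : ℤ → ℤ} {S : Set ℤ} (hγ : IsEnumeration γ S) (i : ℤ) :
    S ∈ voidEvent (γ i) (γ (i + 1)) := by
  refine mem_voidEvent.2 fun j hij hji hj => ?_
  obtain ⟨k, rfl⟩ := hγ.range_eq ▸ hj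
  have hik := hγ.strictMono.lt_iff_lt.1 hij
  have hki := hγ.strictMono.lt_iff_lt.1 hji
  omega

namespace IsTranslationInvariant

variable {ρ : Measure (Set ℤ)} (hρ : IsTranslationInvariant ρ)
include hρ

lemma measure_preimage (g : ℤ) {A : Set (Set ℤ)} (hA : MeasurableSet A) :
    ρ {S | (· + g) ⁻¹' S ∈ A} = ρ A := by
  conv_rhs => rw [← hρ g, Measure.map_apply (measurable_preimage_add_right g) hA]
  rfl

lemma measure_mem (j : ℤ) : ρ {S | j ∈ S} = ρ {S | 0 ∈ S} := by
  rw [← hρ.measure_preimage j (measurableSet_setOf_mem 0)]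
  simp

lemma measure_gapEvent (a : ℤ) (n : ℕ) : ρ (gapEvent a n) = ρ (gapEvent 0 n) := by
  rw [← hρ.measure_preimage a (measurableSet_gapEvent 0 n)]
  simp [preimage_add_right_mem_gapEvent]

lemma measure_voidEvent_add (a b g : ℤ) : ρ (voidEvent (a + g) (b + g)) = ρ (voidEvent a b) := by
  rw [← hρ.measure_preimage g (measurableSet_voidEvent a b)]
  simp [preimage_add_right_mem_voidEvent]

lemma measure_zero_mem_ne_zero (hne : ¬ ∀ᵐ S ∂ρ, S = ∅) : ρ {S | 0 ∈ S} ≠ 0 := by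
  refine fun hzero => hne ?_
  have hall : ∀ᵐ S ∂ρ, ∀ j, j ∉ S := ae_all_iff.2 fun j => by
    simpa [ae_iff] using (hρ.measure_mem j).trans hzero
  filter_upwards [hall] with S hS using eq_empty_of_forall_notMem hS

/-- The gap events at `0, -1, …, -(h - 1)` are disjoint, and each forces the void event. -/
lemma mul_measure_gapEvent_le {n h : ℕ} (hn : 2 * h ≤ n) :
    h * ρ (gapEvent 0 n) ≤ ρ (voidEvent 0 (h + 1)) := by
  have hdisj : Pairwise (Function.onFun Disjoint fun k : Fin h => gapEvent (-(k : ℕ)) n) := by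
    refine (pairwise_disjoint_on _).2 fun k l hkl => disjoint_left.2 fun S hk hl => ?_
    exact mem_voidEvent.1 hl.2 (-(k : ℕ)) (by omega) (by omega) hk.1
  calc h * ρ (gapEvent 0 n) = ∑ k : Fin h, ρ (gapEvent (-(k : ℕ)) n) := by
        simp [hρ.measure_gapEvent (-_)]
    _ = ρ (⋃ k : Fin h, gapEvent (-(k : ℕ)) n) := by
        rw [measure_iUnion hdisj fun k => measurableSet_gapEvent _ n, tsum_fintype]
    _ ≤ ρ (voidEvent 0 (h + 1)) := measure_mono <| iUnion_subset fun k =>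
        inter_subset_right.trans (voidEvent_anti (by omega) (by omega))

/-- Mass transport: translating the point `g` to the origin makes the events for different `g`
disjoint, since at most one point `b` of `S` satisfies `signedCount S b 0 = i`. -/
lemma tsum_measure_signedCount_eq_le (n : ℕ) (a i : ℤ) :
    ∑' g : ℤ, ρ ({S | a ∈ S ∧ signedCount S a g = i} ∩ gapEvent g n) ≤ ρ (gapEvent 0 n) := by
  set F : ℤ → Set (Set ℤ) := fun b => {S | b ∈ S ∧ signedCount S b 0 = i} ∩ gapEvent 0 n with hF
  have hmeas (b : ℤ) : MeasurableSet (F b) :=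
    ((measurableSet_setOf_mem b).inter
      (measurable_signedCount b 0 (measurableSet_singleton i))).inter (measurableSet_gapEvent 0 n)
  have hdisj : Pairwise (Function.onFun Disjoint F) := by
    refine (pairwise_disjoint_on _).2 fun b b' hbb' => disjoint_left.2 fun S hb hb' => ?_
    exact (signedCount_lt_of_lt hbb' hb'.1.1 0).ne (hb'.1.2.trans hb.1.2.symm)
  have htranslate (g : ℤ) :
      ρ ({S | a ∈ S ∧ signedCount S a g = i} ∩ gapEvent g n) = ρ (F (a - g)) := by
    rw [← hρ.measure_preimage g (hmeas (a - g))]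
    congr 1
    ext S
    simp [hF, preimage_add_right_mem_gapEvent, signedCount_preimage_add_right]
  calc ∑' g : ℤ, ρ ({S | a ∈ S ∧ signedCount S a g = i} ∩ gapEvent g n)
      = ∑' b, ρ (F b) := by
        simp only [htranslate]
        exact (Equiv.subLeft a).tsum_eq fun b => ρ (F b)
    _ = ρ (⋃ b, F b) := (measure_iUnion hdisj hmeas).symm
    _ ≤ ρ (gapEvent 0 n) := measure_mono (iUnion_subset fun b => inter_subset_right)

end IsTranslationInvariant

lemma IsEnumeration.mem_of_le_sub {γ : ℤ → ℤ} {S : Set ℤ} (hγ : IsEnumeration γ S) {i : ℤ}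
    {n h : ℕ} (hh : h ≤ n) (hgap : (n : ℤ) ≤ γ (i + 1) - γ i) :
    S ∈ voidEvent 0 (h + 1) ∪ voidEvent (-h) 1 ∪ ⋃ (k : Fin n) (g : ℤ),
      ({S | -(k : ℤ) ∈ S ∧ signedCount S (-(k : ℤ)) g = i} ∩ gapEvent g n) := by
  have hzero : S ∈ voidEvent (γ 0) (γ 1) := hγ.mem_voidEvent_succ 0
  have hnonpos := hγ.nonpos
  have hpos := hγ.pos
  by_cases hfar : (h : ℤ) < γ 1
  · exact .inl (.inl (voidEvent_anti hnonpos (by omega) hzero))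
  by_cases hback : γ 0 ≤ -(h : ℤ)
  · exact .inl (.inr (voidEvent_anti hback (by omega) hzero))
  obtain ⟨k, hk⟩ := Int.eq_ofNat_of_zero_le (show 0 ≤ -γ 0 by omega)
  have hγk : -(k : ℤ) = γ 0 := by omega
  refine .inr (mem_iUnion₂.2 ⟨⟨k, by omega⟩, γ i, ⟨?_, ?_⟩, hγ.mem i,
    voidEvent_anti le_rfl (by omega) (hγ.mem_voidEvent_succ i)⟩)
  · exact hγk ▸ hγ.mem 0
  · exact (congrArg (signedCount S · (γ i)) hγk).trans (hγ.signedCount_eq i)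

lemma measure_le_sub_le_of_isTranslationInvariant {Ω : Type*} [MeasurableSpace Ω] {P : Measure Ω}
    {S : Ω → Set ℤ} {γ : Ω → ℤ → ℤ} (hS : AEMeasurable S P) (hρ : IsTranslationInvariant (P.map S))
    (hγ : ∀ᵐ ω ∂P, IsEnumeration (γ ω) (S ω)) (i : ℤ) {n h : ℕ} (hn : 2 * h ≤ n)
    (hn' : n ≤ 3 * h) :
    P {ω | (n : ℤ) ≤ γ ω (i + 1) - γ ω i} ≤ 5 * P.map S (voidEvent 0 (h + 1)) := by
  set v := P.map S (voidEvent 0 (h + 1)) with hv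
  set U : Fin n → Set (Set ℤ) := fun k =>
    ⋃ g : ℤ, ({S | -(k : ℤ) ∈ S ∧ signedCount S (-(k : ℤ)) g = i} ∩ gapEvent g n)
  have hback : P.map S (voidEvent (-h) 1) = v := by
    simpa using (hρ.measure_voidEvent_add (-h) 1 h).symm.trans (by simp [hv, add_comm])
  have hU (k : Fin n) : P.map S (U k) ≤ P.map S (gapEvent 0 n) :=
    (measure_iUnion_le _).trans (hρ.tsum_measure_signedCount_eq_le n _ i)
  calc P {ω | (n : ℤ) ≤ γ ω (i + 1) - γ ω i}
      ≤ P (S ⁻¹' (voidEvent 0 (h + 1) ∪ voidEvent (-h) 1 ∪ ⋃ k, U k)) := by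
        refine measure_mono_ae ?_
        filter_upwards [hγ] with ω hω hgap using hω.mem_of_le_sub (by omega) hgap
    _ ≤ P.map S (voidEvent 0 (h + 1) ∪ voidEvent (-h) 1 ∪ ⋃ k, U k) := Measure.le_map_apply hS _
    _ ≤ v + v + ∑ k, P.map S (U k) := by
        refine (measure_union_le _ _).trans (add_le_add ((measure_union_le _ _).trans ?_) ?_)
        · rw [hback]
        · exact measure_iUnion_fintype_le _ _
    _ ≤ v + v + (3 * h : ℕ) * P.map S (gapEvent 0 n) := by
        gcongr
        refine (Finset.sum_le_sum fun k _ => hU k).trans ?_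
        rw [Finset.sum_const, Finset.card_univ, Fintype.card_fin, nsmul_eq_mul]
        gcongr
    _ ≤ v + v + 3 * v := by
        rw [Nat.cast_mul, mul_assoc]
        gcongr
        · simp
        · exact hρ.mul_measure_gapEvent_le hn
    _ = 5 * v := by ring

end StationarySubset

/-! ### The pivotal indices -/

section Pivotal

variable {d : ℕ} {p : PMF ℕ}

/-- The set of pivotal indices, expressed through the cells: no bush at an index at most `j` meets
a bush at an index at least `j + 1`. -/
def pivotalSet (x : ℤ → Cell d) : Set ℤ :=
  {j | ∀ a b : ℕ, ¬ BushesMeet x (j - a) (a + b + 1)}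

lemma pivotalSet_comp_add_right (x : ℤ → Cell d) (g : ℤ) :
    pivotalSet (fun k => x (k + g)) = (· + g) ⁻¹' pivotalSet x := by
  ext j
  simp only [pivotalSet, bushesMeet_comp_add_right, mem_ofPred_eq, mem_preimage, sub_add_eq_add_sub]

lemma measurable_pivotalSet : Measurable (pivotalSet (d := d)) := by
  refine measurable_set_iff.2 fun j => measurableSet_setOfPred.1 ?_
  have hinter : {x : ℤ → Cell d | j ∈ pivotalSet x} =
      ⋂ (a : ℕ) (b : ℕ), {x | BushesMeet x (j - a) (a + b + 1)}ᶜ := by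
    ext x
    simp [pivotalSet]
  rw [hinter]
  exact .iInter fun a => .iInter fun b => (measurableSet_bushesMeet _ _).compl

lemma nearBushesMeet_or_farBushesMeet_of_notMem_pivotalSet {x : ℤ → Cell d} {j : ℤ}
    (hj : j ∉ pivotalSet x) (L : ℕ) :
    NearBushesMeet x j L ∨ FarBushesMeet x (j - L) (L + 1) ∨ FarBushesMeet x j (L + 1) := by
  simp only [pivotalSet, mem_ofPred_eq, not_forall, not_not] at hj
  obtain ⟨a, b, hab⟩ := hj
  by_cases ha : L ≤ a
  · refine .inr (.inl ⟨a - L, b, ?_⟩)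
    rwa [show j - L - ((a - L : ℕ) : ℤ) = j - a by omega,
      show L + 1 + (a - L) + b = a + b + 1 by omega]
  by_cases hb : L ≤ b
  · refine .inr (.inr ⟨a, b - L, ?_⟩)
    rwa [show L + 1 + a + (b - L) = a + b + 1 by omega]
  · exact .inl ⟨a, by omega, b, by omega, hab⟩

lemma NearBushesMeet.notMem_pivotalSet {x : ℤ → Cell d} {j : ℤ} {L : ℕ}
    (hj : NearBushesMeet x j L) : j ∉ pivotalSet x := by
  obtain ⟨a, _, b, _, hab⟩ := hj
  exact fun h => h a b hab

namespace BiInfModel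

variable (M : BiInfModel d p)

lemma walk_add_natCast (ω : M.Ω) (m : ℤ) (l : ℕ) :
    M.walk (m + l) ω = M.walk m ω + ∑ k : Fin l, (M.cells ω (m + (k : ℕ))).1 := by
  induction l with
  | zero => simp
  | succ l ih =>
    rw [Fin.sum_univ_castSucc]
    simp only [Fin.val_castSucc, Fin.val_last]
    rw [← add_assoc, ← ih]
    simp [cells, add_assoc]

lemma bushesMeet_cells {ω : M.Ω} {m : ℤ} {l : ℕ} :
    BushesMeet (M.cells ω) m l ↔ (M.bushVerts m ω ∩ M.bushVerts (m + l) ω).Nonempty := by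
  constructor
  · rintro ⟨e, he, e', he', h⟩
    rw [mem_cells] at he he'
    refine ⟨M.bemb m ω e.1, ⟨e.1, he.1, rfl⟩, e'.1, he'.1, ?_⟩
    rw [he.2, he'.2, h, walk_add_natCast, add_assoc]
  · rintro ⟨_, ⟨u, hu, rfl⟩, v, hv, h⟩
    refine ⟨(u, M.bemb m ω u - M.walk m ω), (M.mem_cells).2 ⟨hu, by simp⟩,
      (v, M.bemb (m + l) ω v - M.walk (m + l) ω), (M.mem_cells).2 ⟨hv, by simp⟩, ?_⟩
    simp only
    rw [h, walk_add_natCast]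
    abel

lemma mem_pivotalSet_cells {ω : M.Ω} {j : ℤ} :
    j ∈ pivotalSet (M.cells ω) ↔ M.Pivotal j ω := by
  simp only [pivotalSet, mem_ofPred_eq, bushesMeet_cells, Pivotal, eq_empty_iff_forall_notMem,
    mem_inter_iff, mem_iUnion, not_and, Set.Nonempty, not_exists]
  constructor
  · rintro h y ⟨m, hm, hy⟩ n hn hy'
    obtain ⟨a, ha⟩ := Int.eq_ofNat_of_zero_le (sub_nonneg.2 hm)
    obtain ⟨b, hb⟩ := Int.eq_ofNat_of_zero_le (sub_nonneg.2 hn)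
    refine h a b y ?_ ?_
    · rwa [show j - a = m by omega]
    · rwa [show j - a + ((a + b + 1 : ℕ) : ℤ) = n by omega]
  · exact fun h a b y hy hy' => h y ⟨j - a, by simp, hy⟩ _ (by simp only [mem_Ici]; omega) hy'

lemma ae_isEnumeration_piv :
    ∀ᵐ ω ∂M.P, IsEnumeration (fun i => M.piv i ω) (pivotalSet (M.cells ω)) := by
  filter_upwards [M.hpiv] with ω ⟨hmono, hpiv, hsurj, hpos, hmin⟩
  refine ⟨hmono, ?_, ?_, hpos⟩
  · ext j
    exact ⟨by rintro ⟨i, rfl⟩; exact (M.mem_pivotalSet_cells).2 (hpiv i),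
      fun hj => hsurj j ((M.mem_pivotalSet_cells).1 hj)⟩
  · by_contra! h0
    exact (hmono zero_lt_one).not_ge (hmin _ h0 (hpiv 0))

end BiInfModel

/-- The law of the random set of pivotal indices. -/
def pivotalLaw (d : ℕ) (hp : HasMeanOne p) : Measure (Set ℤ) :=
  (cellSeqLaw d hp).map pivotalSet

variable [NeZero d]

instance (hp : HasMeanOne p) : IsProbabilityMeasure (pivotalLaw d hp) :=
  Measure.isProbabilityMeasure_map measurable_pivotalSet.aemeasurable

lemma isTranslationInvariant_pivotalLaw (hp : HasMeanOne p) :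
    IsTranslationInvariant (pivotalLaw d hp) := by
  intro g
  have hcomm : (fun S => (· + g) ⁻¹' S) ∘ pivotalSet (d := d) =
      pivotalSet ∘ fun x k => x (k + g) :=
    funext fun x => (pivotalSet_comp_add_right x g).symm
  rw [pivotalLaw, Measure.map_map (measurable_preimage_add_right g) measurable_pivotalSet, hcomm,
    ← Measure.map_map measurable_pivotalSet (by fun_prop), cellSeqLaw,
    infinitePi_const_map_add_right]

namespace BiInfModel

variable (M : BiInfModel d p)

lemma aemeasurable_pivotalSet_cells (hp : HasMeanOne p) :
    AEMeasurable (fun ω => pivotalSet (M.cells ω)) M.P :=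
  measurable_pivotalSet.comp_aemeasurable (M.aemeasurable_cells hp)

lemma map_pivotalSet_cells (hp : HasMeanOne p) :
    M.P.map (fun ω => pivotalSet (M.cells ω)) = pivotalLaw d hp := by
  rw [pivotalLaw, ← M.map_cells hp, AEMeasurable.map_map_of_aemeasurable
    measurable_pivotalSet.aemeasurable (M.aemeasurable_cells hp)]
  rfl

lemma measure_le_piv_sub_le (hp : HasMeanOne p) (i : ℤ) {n h : ℕ} (hn : 2 * h ≤ n)
    (hn' : n ≤ 3 * h) :
    M.P {ω | (n : ℤ) ≤ M.piv (i + 1) ω - M.piv i ω} ≤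
      5 * pivotalLaw d hp (voidEvent 0 (h + 1)) := by
  have hinv := isTranslationInvariant_pivotalLaw (d := d) hp
  rw [← M.map_pivotalSet_cells hp] at hinv ⊢
  exact measure_le_sub_le_of_isTranslationInvariant (M.aemeasurable_pivotalSet_cells hp) hinv
    M.ae_isEnumeration_piv i hn hn'

end BiInfModel

lemma pivotalLaw_zero_mem_ne_zero (M : BiInfModel d p) (hp : HasMeanOne p) :
    pivotalLaw d hp {S | 0 ∈ S} ≠ 0 := by
  refine (isTranslationInvariant_pivotalLaw hp).measure_zero_mem_ne_zero fun hempty => ?_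
  rw [← M.map_pivotalSet_cells hp] at hempty
  obtain ⟨ω, hω, hγ⟩ :=
    ((ae_of_ae_map (M.aemeasurable_pivotalSet_cells hp) hempty).and M.ae_isEnumeration_piv).exists
  exact notMem_empty _ (hω ▸ hγ.mem 0)

lemma cellSeqLaw_nearBushesMeet_le (hp : HasMeanOne p) (j : ℤ) (L : ℕ) :
    cellSeqLaw d hp {x | NearBushesMeet x j L} ≤ 1 - pivotalLaw d hp {S | 0 ∈ S} := by
  have hmeas : MeasurableSet {S : Set ℤ | j ∈ S} := measurableSet_setOf_mem j
  rw [← (isTranslationInvariant_pivotalLaw hp).measure_mem j, ← prob_compl_eq_one_sub hmeas,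
    pivotalLaw, Measure.map_apply measurable_pivotalSet hmeas.compl]
  exact measure_mono fun x => NearBushesMeet.notMem_pivotalSet

lemma cellSeqLaw_forall_nearBushesMeet_le (hp : HasMeanOne p) (L K : ℕ) :
    cellSeqLaw d hp {x | ∀ k < K, NearBushesMeet x (2 * k * L + 1) L} ≤
      (1 - pivotalLaw d hp {S | 0 ∈ S}) ^ K := by
  induction K with
  | zero => simp
  | succ K ih =>
    have hsplit : {x : ℤ → Cell d | ∀ k < K + 1, NearBushesMeet x (2 * k * L + 1) L} =
        {x | ∀ k < K, NearBushesMeet x (2 * k * L + 1) L} ∩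
          {x | NearBushesMeet x (2 * K * L + 1) L} := by
      ext x
      exact Nat.forall_lt_succ_right
    have hpast : DependsOn (· ∈ {x : ℤ → Cell d | ∀ k < K, NearBushesMeet x (2 * k * L + 1) L})
        (Finset.Ioc (1 - (L : ℤ)) (2 * K * L + 1 - L)) := by
      intro x y hxy
      refine propext (forall₂_congr fun k hk => ?_)
      refine (dependsOn_nearBushesMeet (2 * k * L + 1) L fun j hj => hxy j ?_).to_iff
      have hkK : ((k : ℤ) + 1) * L ≤ K * L := by gcongr; omega
      have hk0 : 0 ≤ (k : ℤ) * L := by positivity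
      simp only [Finset.coe_Ioc, mem_Ioc] at hj ⊢
      constructor <;> linarith
    have hdisj : Disjoint (Finset.Ioc (1 - (L : ℤ)) (2 * K * L + 1 - L))
        (Finset.Ioc (2 * (K : ℤ) * L + 1 - L) (2 * K * L + 1 + L)) :=
      Finset.disjoint_left.2 (by grind)
    rw [hsplit, cellSeqLaw, infinitePi_inter_of_dependsOn _ hdisj hpast
      (dependsOn_nearBushesMeet _ L), pow_succ]
    exact mul_le_mul' ih (cellSeqLaw_nearBushesMeet_le hp _ L)

/-- The indices `2 k L + 1`, `k < K`, are the centres of `K` disjoint windows of radius `L`. -/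
lemma pivotalLaw_voidEvent_le (hp : HasMeanOne p) {L K h : ℕ} (hh : h ≠ 0) (hKL : 2 * K * L ≤ h) :
    pivotalLaw d hp (voidEvent 0 (h + 1)) ≤
      (1 - pivotalLaw d hp {S | 0 ∈ S}) ^ K + K * (2 * farMeetBound d hp (L + 1)) := by
  have hsub : {x : ℤ → Cell d | pivotalSet x ∈ voidEvent 0 (h + 1)} ⊆
      {x | ∀ k < K, NearBushesMeet x (2 * k * L + 1) L} ∪ ⋃ k : Fin K,
        ({x | FarBushesMeet x (2 * k * L + 1 - L) (L + 1)} ∪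
          {x | FarBushesMeet x (2 * k * L + 1) (L + 1)}) := by
    intro x hx
    refine or_iff_not_imp_left.2 fun hnear => ?_
    simp only [mem_ofPred_eq, not_forall] at hnear
    obtain ⟨k, hk, hnear⟩ := hnear
    have hle : 2 * k * L + 1 ≤ h := by
      rcases L.eq_zero_or_pos with rfl | hL
      · omega
      · have : 2 * (k + 1) * L ≤ 2 * K * L := by gcongr; omega
        linarith
    have hvoid := mem_voidEvent.1 hx (2 * k * L + 1) (by positivity) (by norm_cast; omega)
    exact mem_iUnion.2 ⟨⟨k, hk⟩,
      (nearBushesMeet_or_farBushesMeet_of_notMem_pivotalSet hvoid L).resolve_left hnear⟩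
  rw [pivotalLaw, Measure.map_apply measurable_pivotalSet (measurableSet_voidEvent _ _)]
  refine (measure_mono hsub).trans ((measure_union_le _ _).trans
    (add_le_add (cellSeqLaw_forall_nearBushesMeet_le hp L K) ?_))
  calc _ ≤ ∑ _k : Fin K, 2 * farMeetBound d hp (L + 1) := by
        refine (measure_iUnion_fintype_le _ _).trans (Finset.sum_le_sum fun k _ => ?_)
        refine (measure_union_le _ _).trans ((add_le_add
          (cellSeqLaw_farBushesMeet_le hp _ L.succ_ne_zero)
          (cellSeqLaw_farBushesMeet_le hp _ L.succ_ne_zero)).trans_eq (two_mul _).symm)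
    _ = K * (2 * farMeetBound d hp (L + 1)) := by simp

end Pivotal

/-! ### Choice of the number of windows -/

section WindowCount

lemma one_sub_pow_ceil_log_le {c x : ℝ} (hc : 0 < c) (hc1 : c ≤ 1) (hx : 0 < x) (s : ℝ) :
    (1 - c) ^ ⌈s / c * Real.log x⌉₊ ≤ x ^ (-s) := by
  set K := ⌈s / c * Real.log x⌉₊
  have hcK : s * Real.log x ≤ c * K := by
    calc s * Real.log x = c * (s / c * Real.log x) := by field_simp
      _ ≤ c * K := by gcongr; exact Nat.le_ceil _
  calc (1 - c) ^ K ≤ Real.exp (-c) ^ K :=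
        pow_le_pow_left₀ (sub_nonneg.2 hc1) (Real.one_sub_le_exp_neg c) K
    _ = Real.exp (K * -c) := (Real.exp_nat_mul _ _).symm
    _ ≤ Real.exp (Real.log x * -s) := Real.exp_le_exp.2 (by linarith)
    _ = x ^ (-s) := (Real.rpow_def_of_pos hx _).symm

lemma ceil_mul_log_le {a x : ℝ} (ha : 0 ≤ a) (hx : 2 ≤ x) :
    (⌈a * Real.log x⌉₊ : ℝ) ≤ (a + 1 / Real.log 2) * Real.log x := by
  have hlog2 : 0 < Real.log 2 := Real.log_pos one_lt_two
  have hlog : Real.log 2 ≤ Real.log x := Real.log_le_log two_pos hx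
  calc (⌈a * Real.log x⌉₊ : ℝ) ≤ a * Real.log x + 1 :=
        (Nat.ceil_lt_add_one (mul_nonneg ha (hlog2.le.trans hlog))).le
    _ ≤ a * Real.log x + Real.log x / Real.log 2 := by gcongr; exact (one_le_div hlog2).2 hlog
    _ = (a + 1 / Real.log 2) * Real.log x := by ring

lemma rpow_neg_le_of_le_mul {b x y s : ℝ} (hb : 0 < b) (hx : 0 < x) (hs : 0 ≤ s)
    (hxy : x ≤ b * y) : y ^ (-s) ≤ b ^ s * x ^ (-s) := by
  calc y ^ (-s) ≤ (x / b) ^ (-s) :=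
        Real.rpow_le_rpow_of_nonpos (by positivity) ((div_le_iff₀' hb).2 hxy)
          (neg_nonpos.2 hs)
    _ = b ^ s * x ^ (-s) := by
        rw [Real.div_rpow hx.le hb.le, Real.rpow_neg hb.le, div_inv_eq_mul, mul_comm]

lemma mul_rpow_neg_le_of_le_mul {A B s t x y : ℝ} {K : ℕ} (hK : K ≠ 0) (hA : 0 ≤ A) (hB : 0 ≤ B)
    (ht : 0 ≤ t) (hs : 0 ≤ s) (hx : 0 < x) (hKt : K ≤ B * t) (hxy : x ≤ 6 * K * y) :
    K * (2 * (A * y ^ (-s))) ≤ A * (6 * B) ^ (1 + s) * t ^ (1 + s) * x ^ (-s) := by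
  have hy : 0 < y := pos_of_mul_pos_right (hx.trans_le hxy) (by positivity)
  have hKB : 6 * K ≤ 6 * B * t := by linarith
  calc K * (2 * (A * y ^ (-s))) = A * ((2 * K) * y ^ (-s)) := by ring
    _ ≤ A * ((6 * K) * ((6 * K) ^ s * x ^ (-s))) := by
        gcongr A * (?_ * ?_)
        · gcongr
          norm_num
        · exact rpow_neg_le_of_le_mul (by positivity) hx hs hxy
    _ = A * (6 * K) ^ (1 + s) * x ^ (-s) := by
        rw [Real.rpow_add (by positivity), Real.rpow_one]
        ring
    _ ≤ A * ((6 * B) * t) ^ (1 + s) * x ^ (-s) := by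
        gcongr
    _ = A * (6 * B) ^ (1 + s) * t ^ (1 + s) * x ^ (-s) := by
        rw [Real.mul_rpow (by positivity) ht]
        ring

lemma exists_pow_ceil_log_add_le {s c A : ℝ} (hs : 0 < s) (hc : 0 < c) (hc1 : c ≤ 1)
    (hA : 0 ≤ A) :
    ∃ C : ℝ, ∀ x y : ℝ, 2 ≤ x → x ≤ 6 * ⌈s / c * Real.log x⌉₊ * y →
      (1 - c) ^ ⌈s / c * Real.log x⌉₊ + ⌈s / c * Real.log x⌉₊ * (2 * (A * y ^ (-s))) ≤
        C * Real.log x ^ (1 + s) * x ^ (-s) := by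
  have hlog2 : 0 < Real.log 2 := Real.log_pos one_lt_two
  set B := s / c + 1 / Real.log 2
  refine ⟨(Real.log 2 ^ (1 + s))⁻¹ + A * (6 * B) ^ (1 + s), fun x y hx hxy => ?_⟩
  have hx0 : 0 < x := by linarith
  have hlog : Real.log 2 ≤ Real.log x := Real.log_le_log two_pos hx
  have hlog0 : 0 < Real.log x := hlog2.trans_le hlog
  have hnear : (1 - c) ^ ⌈s / c * Real.log x⌉₊ ≤
      (Real.log 2 ^ (1 + s))⁻¹ * Real.log x ^ (1 + s) * x ^ (-s) := by
    refine (one_sub_pow_ceil_log_le hc hc1 hx0 s).trans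
      (le_mul_of_one_le_left (by positivity) ?_)
    rw [inv_mul_eq_div, one_le_div (by positivity)]
    exact Real.rpow_le_rpow hlog2.le hlog (by linarith)
  have hfar := mul_rpow_neg_le_of_le_mul (Nat.ceil_pos.2 (by positivity)).ne' hA (B := B)
    (by positivity) hlog0.le hs.le hx0 (ceil_mul_log_le (by positivity) hx) hxy
  linarith

end WindowCount

/-! ### Tail bounds -/

section TailBound

variable {d : ℕ} {p : PMF ℕ} [NeZero d]

lemma toReal_pivotalLaw_voidEvent_le (hp : HasMeanOne p) {L K h : ℕ} (hh : h ≠ 0)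
    (hKL : 2 * K * L ≤ h) {b : ℝ} (hb : 0 ≤ b)
    (hfar : farMeetBound d hp (L + 1) ≤ ENNReal.ofReal b) :
    (pivotalLaw d hp (voidEvent 0 (h + 1))).toReal ≤
      (1 - (pivotalLaw d hp {S | 0 ∈ S}).toReal) ^ K + K * (2 * b) := by
  set c := pivotalLaw d hp {S | 0 ∈ S}
  have hc1 : c ≤ 1 := prob_le_one
  have hle : pivotalLaw d hp (voidEvent 0 (h + 1)) ≤
      (1 - c) ^ K + K * (2 * ENNReal.ofReal b) :=
    (pivotalLaw_voidEvent_le hp hh hKL).trans (by gcongr)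
  refine (ENNReal.toReal_mono (by finiteness) hle).trans_eq ?_
  rw [ENNReal.toReal_add (by finiteness) (by finiteness), ENNReal.toReal_pow,
    ENNReal.toReal_sub_of_le hc1 (by finiteness)]
  simp [hb]

lemma exists_toReal_pivotalLaw_voidEvent_le (hd : 8 < d) (hp : HasMeanOne p)
    (hsq : FiniteSecondMoment p) (hpos : pivotalLaw d hp {S | 0 ∈ S} ≠ 0) :
    ∃ C : ℝ, ∀ n : ℕ, 2 ≤ n →
      (pivotalLaw d hp (voidEvent 0 ((n / 2 : ℕ) + 1))).toReal ≤
        C * Real.log n ^ (((d : ℝ) - 6) / 2) * (n : ℝ) ^ (-(((d : ℝ) - 8) / 2)) := by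
  have hd' : (8 : ℝ) < d := by exact_mod_cast hd
  set s : ℝ := ((d : ℝ) - 8) / 2 with hs
  have hs0 : 0 < s := by linarith
  obtain ⟨A, hfar⟩ := hasPolyDecay_farMeetBound hd hp hsq
  set c := (pivotalLaw d hp {S | 0 ∈ S}).toReal
  have hc : 0 < c := ENNReal.toReal_pos hpos (by finiteness)
  have hc1 : c ≤ 1 := ENNReal.toReal_le_of_le_ofReal one_pos.le (by simpa using prob_le_one)
  obtain ⟨C, hC⟩ := exists_pow_ceil_log_add_le hs0 hc hc1 A.coe_nonneg
  refine ⟨C, fun n hn => ?_⟩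
  have hn' : (2 : ℝ) ≤ n := by exact_mod_cast hn
  set K := ⌈s / c * Real.log n⌉₊
  have hK0 : 0 < K := Nat.ceil_pos.2 (mul_pos (div_pos hs0 hc) (Real.log_pos (by linarith)))
  set L := n / 2 / (2 * K)
  have hnL : (n : ℝ) ≤ 6 * K * (L + 1 : ℕ) := by
    have hlt : n / 2 < 2 * K * (L + 1) := Nat.lt_mul_div_succ _ (by omega)
    have hle : n ≤ 3 * (2 * K * (L + 1)) := by omega
    calc (n : ℝ) ≤ (3 * (2 * K * (L + 1)) : ℕ) := by exact_mod_cast hle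
      _ = 6 * K * (L + 1 : ℕ) := by push_cast; ring
  have hbound : farMeetBound d hp (L + 1) ≤ ENNReal.ofReal (A * ((L + 1 : ℕ) : ℝ) ^ (-s)) := by
    rw [ENNReal.ofReal_mul A.coe_nonneg, ENNReal.ofReal_coe_nnreal]
    exact hfar (L + 1) L.succ_pos
  rw [show ((d : ℝ) - 6) / 2 = 1 + s by rw [hs]; ring]
  exact (toReal_pivotalLaw_voidEvent_le hp (by omega) (Nat.mul_div_le _ _) (by positivity)
    hbound).trans (hC n _ hn' hnL)

end TailBound

theorem tail_of_gaps_between_pivotal_points_general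
    (d : ℕ) (hd : 8 < d) (p : PMF ℕ) (hmean : HasMeanOne p) (hsq : FiniteSecondMoment p)
    (M : BiInfModel d p) :
    ∃ C : ℝ, ∀ (i : ℤ) (n : ℕ), 2 ≤ n →
      (M.P {ω | (n : ℤ) ≤ M.piv (i + 1) ω - M.piv i ω}).toReal
        ≤ C * Real.rpow (Real.log n) (((d : ℝ) - 6) / 2) *
            Real.rpow (n : ℝ) (-(((d : ℝ) - 8) / 2)) := by
  have : NeZero d := ⟨by omega⟩
  obtain ⟨C, hC⟩ := exists_toReal_pivotalLaw_voidEvent_le hd hmean hsq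
    (pivotalLaw_zero_mem_ne_zero M hmean)
  refine ⟨5 * C, fun i n hn => ?_⟩
  have hgap := M.measure_le_piv_sub_le hmean i (n := n) (h := n / 2) (by omega) (by omega)
  calc (M.P {ω | (n : ℤ) ≤ M.piv (i + 1) ω - M.piv i ω}).toReal
      ≤ 5 * (pivotalLaw d hmean (voidEvent 0 ((n / 2 : ℕ) + 1))).toReal := by
        simpa using ENNReal.toReal_mono (by finiteness) hgap
    _ ≤ 5 * (C * Real.log n ^ (((d : ℝ) - 6) / 2) * (n : ℝ) ^ (-(((d : ℝ) - 8) / 2))) := by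
        gcongr
        exact hC n hn
    _ = 5 * C * Real.log n ^ (((d : ℝ) - 6) / 2) * (n : ℝ) ^ (-(((d : ℝ) - 8) / 2)) := by ring

/-!
STATEMENT 15.  Assume `E[Z²] < ∞` and `d > 10` (so that pivotal points exist
`P^{-∞,∞}`-a.s., which is part of the model `M`).  There exists `C < ∞` such that for
every `i ∈ ℤ` and every `n ≥ 2`,
`P^{-∞,∞}[γ_{i+1} - γ_i ≥ n] ≤ C (log n)^{(d-6)/2} n^{-(d-8)/2}`.
-/
theorem tail_of_gaps_between_pivotal_points
    (d : ℕ) (hd : 10 < d) (p : PMF ℕ)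
    (hmean : HasMeanOne p) (hnontriv : p 1 < 1)
    (hsq : FiniteSecondMoment p) (hvar : PosVariance p)
    (M : BiInfModel d p) :
    ∃ C : ℝ, ∀ (i : ℤ) (n : ℕ), 2 ≤ n →
      (M.P {ω | (n : ℤ) ≤ M.piv (i + 1) ω - M.piv i ω}).toReal
        ≤ C * Real.rpow (Real.log n) (((d : ℝ) - 6) / 2) *
            Real.rpow (n : ℝ) (-(((d : ℝ) - 8) / 2)) :=
  tail_of_gaps_between_pivotal_points_general d (by omega) p hmean hsq M
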